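/- arXiv:cs/0610138 — 9 statements merged into one kernel-verified Lean document; each statement's English description precedes it below -/
import Mathlib

section
/- (Theorem 3, achievability for the BEC.) Fix an erasure probability beta in (0,1) and a rate R' in bits per channel use with 0 < R' < 1 - beta; let R = R' ln 2. Then for every eps > 0 there exists d_0 such that for every delay d >= d_0 there exist a rate-R encoder with noiseless feedback for BEC(beta) and a delay-d rate-R decoder such that for every bit position i >= 1, P(hat B_i(ceil(i/R') + d) != B_i) <= exp(-d (1 - eps) E_a^{bec}(R')). In particular every fixed-delay exponent alpha < E_a^{bec}(R') is asymptotically achievable at rate R over BEC(beta) with noiseless feedback. -/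
/-!
The encoder keeps a FIFO queue of message bits and repeats the oldest undelivered bit until feedback
shows that it has got through. If `T` is a time at which the queue was last empty, the number of
bits delivered by time `n` is at least the number that arrived by `T` plus the number of unerased
outputs in `[T, n)`. Hence bit `i` can be late only if, for some `T`, at most `i - R' T` outputs in
`[T, n)` are unerased, and a union bound over `T` with Chernoff parameter `s` gives a geometric
series of order `exp (-d Λ(s))`, where `Λ(s) = -log (β + (1 - β) e⁻ˢ)`, provided `s R' < Λ(s)`.

The exponent is dual to this proviso: since `D(p‖1-β) ≥ Λ(s) - s p`, with equality at `p = Λ'(s)`,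
the infimum defining `EaBec β R'` equals `r R'` for the positive root `r` of `Λ(r) = r R'`. As `Λ`
is strictly concave and vanishes at `0`, every `s ∈ (0, r)` is admissible, and `Λ(s) > s R'`, which
tends to `EaBec β R'` as `s ↑ r`.
-/

open scoped BigOperators

noncomputable section

/-- The binary erasure channel `BEC(β)`: inputs `Bool`, outputs `Option Bool`
(`none` is the erasure symbol `e`), with `p_{x|x} = 1-β` and `p_{e|x} = β`. -/
def becChannel (β : ℝ) : Bool → Option Bool → ℝ :=
  fun x y => if y = some x then 1 - β else if y = none then β else 0

/-- Binary Kullback-Leibler divergence `D(p‖q)` in nats. -/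
def klBin (p q : ℝ) : ℝ :=
  p * Real.log (p / q) + (1 - p) * Real.log ((1 - p) / (1 - q))

/-- The fixed-delay exponent of the BEC,
`E_a^{bec}(R') = inf_{0 ≤ λ < 1} D(λR' ‖ 1-β)/(1-λ)` (in nats, `R'` in bits/use). -/
def EaBec (β R' : ℝ) : ℝ :=
  sInf {e | ∃ lam : ℝ, 0 ≤ lam ∧ lam < 1 ∧ e = klBin (lam * R') (1 - β) / (1 - lam)}

/-- Extend a finite bit string by `false`s. -/
def extendB {M : ℕ} (b : Fin M → Bool) : ℕ → Bool :=
  fun k => if h : k < M then b ⟨k, h⟩ else false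

/-- Extend a finite output string arbitrarily. -/
def extendY {Y : Type} [Nonempty Y] {n : ℕ} (y : Fin n → Y) : ℕ → Y :=
  fun t => if h : t < n then y ⟨t, h⟩ else Classical.arbitrary Y

/-- A rate-`R` encoder with noiseless feedback: the channel input at the (1-indexed)
time `t+1` may depend only on the past channel outputs `Y_1^t` and on the first
`⌊R'·(t+1)⌋` message bits (`R'` is the rate in bits per channel use). -/
def IsFeedbackEncoder {X Y : Type} (R' : ℝ) (enc : ℕ → (ℕ → Y) → (ℕ → Bool) → X) : Prop :=
  ∀ t : ℕ, ∀ ys ys' : ℕ → Y, ∀ b b' : ℕ → Bool,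
    (∀ s, s < t → ys s = ys' s) →
    (∀ k, k < Nat.floor (R' * ((t : ℝ) + 1)) → b k = b' k) →
    enc t ys b = enc t ys' b'

/-- The probability that a delay decoder `dec` errs on the (1-indexed) message bit `i`,
for a feedback encoder, computed under the explicit finite product law
`P(b,y) = 2^{-M} ∏_t p_{y_t | enc_t(y_1^{t-1}, b)}` on `M` i.i.d. fair message bits and
`n` channel outputs. -/
def bitErrProbFb {X Y : Type} [Fintype X] [Fintype Y] [Nonempty Y] (P : X → Y → ℝ)
    (enc : ℕ → (ℕ → Y) → (ℕ → Bool) → X) (n M : ℕ) (dec : (Fin n → Y) → Bool)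
    (i : ℕ) : ℝ :=
  ∑ b : Fin M → Bool, ∑ y : Fin n → Y,
    ((2 : ℝ) ^ M)⁻¹ * (∏ t : Fin n, P (enc t (extendY y) (extendB b)) (y t)) *
      (if dec y = extendB b (i - 1) then 0 else 1)

section FeedbackExpectation

open Finset

variable {X Y : Type}

/-- Causality: the value of `g` at time `t` depends only on the outputs before time `t`. -/
def IsCausal {Y Z : Type*} (g : ℕ → (ℕ → Y) → Z) : Prop :=
  ∀ t ys ys', (∀ s < t, ys s = ys' s) → g t ys = g t ys'

lemma extendY_val [Nonempty Y] {n : ℕ} (y : Fin n → Y) (t : Fin n) : extendY y t = y t := by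
  simp [extendY]

lemma extendY_snoc_of_lt [Nonempty Y] {n : ℕ} (y : Fin n → Y) (v : Y) {s : ℕ} (hs : s < n) :
    extendY (Fin.snoc (α := fun _ => Y) y v) s = extendY y s := by
  simp only [extendY, hs, hs.trans n.lt_succ_self, dif_pos]
  exact Fin.snoc_castSucc (α := fun _ => Y) v y ⟨s, hs⟩

lemma sum_prod_eq_prod_of_isCausal {R : Type*} [CommSemiring R] [Fintype Y] [Nonempty Y]
    {g : ℕ → (ℕ → Y) → Y → R} {c : ℕ → R} (hg : IsCausal g) (hc : ∀ t ys, ∑ v, g t ys v = c t)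
    (n : ℕ) : ∑ y : Fin n → Y, ∏ t : Fin n, g t (extendY y) (y t) = ∏ t ∈ range n, c t := by
  induction n with
  | zero => simp
  | succ n ih =>
    have split_last (y : Fin n → Y) (v : Y) :
        ∏ t : Fin (n + 1), g t (extendY (Fin.snoc (α := fun _ => Y) y v))
          (Fin.snoc (α := fun _ => Y) y v t) =
        (∏ t : Fin n, g t (extendY y) (y t)) * g n (extendY y) v := by
      simp only [Fin.prod_univ_castSucc, Fin.snoc_castSucc, Fin.snoc_last, Fin.val_castSucc,
        Fin.val_last]
      congr 1
      · refine prod_congr rfl fun t _ => ?_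
        rw [hg t _ (extendY y) fun s hs => extendY_snoc_of_lt y v (hs.trans t.2)]
      · rw [hg n _ (extendY y) fun s hs => extendY_snoc_of_lt y v hs]
    calc ∑ y : Fin (n + 1) → Y, ∏ t : Fin (n + 1), g t (extendY y) (y t)
      _ = ∑ y : Fin n → Y, ∑ v, (∏ t : Fin n, g t (extendY y) (y t)) * g n (extendY y) v := by
          rw [← (Fin.snocEquiv fun _ : Fin (n + 1) => Y).sum_comp, Fintype.sum_prod_type, sum_comm]
          exact sum_congr rfl fun y _ => sum_congr rfl fun v _ => split_last y v
      _ = ∏ t ∈ range (n + 1), c t := by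
          simp only [← mul_sum, hc, ← sum_mul, ih, prod_range_succ]

variable [Fintype Y] [Nonempty Y]

/-- The expectation of `f` over the first `n` outputs of the channel `P` driven by the feedback
encoder `enc` of a fixed message. Finite output strings are padded by `extendY`, so only functions
of the first `n` outputs are meaningful. -/
def feedbackExpect (P : X → Y → ℝ) (enc : ℕ → (ℕ → Y) → X) (n : ℕ) (f : (ℕ → Y) → ℝ) : ℝ :=
  ∑ y : Fin n → Y, (∏ t : Fin n, P (enc t (extendY y)) (y t)) * f (extendY y)

lemma feedbackExpect_mono {P : X → Y → ℝ} (hP : ∀ x y, 0 ≤ P x y) {enc : ℕ → (ℕ → Y) → X} {n : ℕ}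
    {f g : (ℕ → Y) → ℝ} (hfg : ∀ ys, (∀ t < n, P (enc t ys) (ys t) ≠ 0) → f ys ≤ g ys) :
    feedbackExpect P enc n f ≤ feedbackExpect P enc n g := by
  refine sum_le_sum fun y _ => ?_
  by_cases hy : ∏ t : Fin n, P (enc t (extendY y)) (y t) = 0
  · simp [hy]
  · refine mul_le_mul_of_nonneg_left (hfg _ fun t ht => ?_) (prod_nonneg fun t _ => hP _ _)
    have hpos := prod_ne_zero_iff.1 hy ⟨t, ht⟩ (mem_univ _)
    rwa [← extendY_val y] at hpos

lemma feedbackExpect_sum_mul {ι : Type*} (P : X → Y → ℝ) (enc : ℕ → (ℕ → Y) → X) (n : ℕ)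
    (S : Finset ι) (c : ι → ℝ) (f : ι → (ℕ → Y) → ℝ) :
    feedbackExpect P enc n (fun ys => ∑ j ∈ S, c j * f j ys) =
      ∑ j ∈ S, c j * feedbackExpect P enc n (f j) := by
  simp only [feedbackExpect, mul_sum]
  rw [sum_comm]
  simp only [mul_left_comm]

lemma feedbackExpect_prod {P : X → Y → ℝ} {enc : ℕ → (ℕ → Y) → X} (henc : IsCausal enc)
    {φ : ℕ → Y → ℝ} {c : ℕ → ℝ} (hφ : ∀ t x, ∑ v, P x v * φ t v = c t) (n : ℕ) :
    feedbackExpect P enc n (fun ys => ∏ t ∈ range n, φ t (ys t)) = ∏ t ∈ range n, c t := by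
  have hcausal : IsCausal fun t ys v => P (enc t ys) v * φ t v := fun t ys ys' h => by
    simp only [henc t ys ys' h]
  rw [← sum_prod_eq_prod_of_isCausal hcausal (fun t ys => hφ t (enc t ys))]
  simp only [feedbackExpect, prod_range, extendY_val, prod_mul_distrib]

lemma bitErrProbFb_le_of_forall_feedbackExpect_le [Fintype X] {P : X → Y → ℝ}
    {enc : ℕ → (ℕ → Y) → (ℕ → Bool) → X} {n i : ℕ} {dec : (ℕ → Y) → Bool} {c : ℝ}
    (h : ∀ b : ℕ → Bool, feedbackExpect P (fun t ys => enc t ys b) n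
      (fun ys => if dec ys = b (i - 1) then 0 else 1) ≤ c) (M : ℕ) :
    bitErrProbFb P enc n M (fun y => dec (extendY y)) i ≤ c := by
  calc bitErrProbFb P enc n M (fun y => dec (extendY y)) i
    _ = ∑ b : Fin M → Bool, ((2 : ℝ) ^ M)⁻¹ *
          feedbackExpect P (fun t ys => enc t ys (extendB b)) n
            (fun ys => if dec ys = extendB b (i - 1) then 0 else 1) := by
        simp only [bitErrProbFb, feedbackExpect, mul_sum, mul_assoc]
    _ ≤ ∑ _b : Fin M → Bool, ((2 : ℝ) ^ M)⁻¹ * c := by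
        gcongr
        exact h _
    _ = c := by simp

end FeedbackExpectation

section Queue

open Finset

variable {α : Type*} (A : ℕ → ℕ) (ys : ℕ → Option α)

/-- The number of symbols delivered before time slot `t` over an erasure channel with outputs `ys`
when the oldest waiting symbol is repeated until it is received. Here `A t` symbols arrive in the
first `t` slots; those that arrive in slot `t` itself, `A (t + 1)` in total with the earlier ones,
can already be sent in it. -/
def delivered : ℕ → ℕ
  | 0 => 0
  | t + 1 => if delivered t < A (t + 1) ∧ (ys t).isSome then delivered t + 1 else delivered t

/-- The feedback encoder that transmits the oldest undelivered symbol of `b`. -/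
def queueEnc [Inhabited α] (t : ℕ) (ys : ℕ → Option α) (b : ℕ → α) : α :=
  if delivered A ys t < A (t + 1) then b (delivered A ys t) else default

/-- The time slot in which the symbol with 0-based index `k` is delivered (`0` if it never is). -/
def deliveryTime (k : ℕ) : ℕ := sInf {t | k < delivered A ys (t + 1)}

/-- The decoder matching `queueEnc`, for the symbol with 0-based index `k`. -/
def queueDec [Inhabited α] (k : ℕ) : α := (ys (deliveryTime A ys k)).getD default

/-- The number of unerased outputs in the time slots `[T, n)`. -/
def unerased (T n : ℕ) : ℕ := #{t ∈ range n | T ≤ t ∧ (ys t).isSome}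

lemma isCausal_delivered : IsCausal fun t (ys : ℕ → Option α) => delivered A ys t := by
  intro t ys ys' h
  induction t with
  | zero => rfl
  | succ t ih =>
    simp only at ih
    simp only [delivered, ih fun s hs => h s (hs.trans t.lt_succ_self), h t t.lt_succ_self]

lemma queueEnc_congr [Inhabited α] {t : ℕ} {ys ys' : ℕ → Option α} {b b' : ℕ → α}
    (hys : ∀ s < t, ys s = ys' s) (hb : ∀ k < A (t + 1), b k = b' k) :
    queueEnc A t ys b = queueEnc A t ys' b' := by
  have hdel : delivered A ys t = delivered A ys' t := isCausal_delivered A t ys ys' hys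
  simp only [queueEnc, hdel]
  split_ifs with hlt
  · exact hb _ hlt
  · rfl

variable {A ys}

lemma deliveryTime_spec {k n : ℕ} (h : k < delivered A ys n) :
    deliveryTime A ys k < n ∧ delivered A ys (deliveryTime A ys k) = k ∧
      k < A (deliveryTime A ys k + 1) ∧ (ys (deliveryTime A ys k)).isSome := by
  obtain _ | m := n
  · simp [delivered] at h
  set t := deliveryTime A ys k
  have hle : t ≤ m := Nat.sInf_le h
  have hafter : k < delivered A ys (t + 1) := Nat.sInf_mem (s := {t | k < delivered A ys (t + 1)})
    ⟨m, h⟩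
  have hbefore : delivered A ys t ≤ k := by
    cases hu : t with
    | zero => simp [delivered]
    | succ u =>
      have hmin : u ∉ {t | k < delivered A ys (t + 1)} :=
        Nat.notMem_of_lt_sInf (u.lt_succ_self.trans_eq hu.symm)
      exact not_lt.1 hmin
  rw [delivered] at hafter
  split_ifs at hafter with hsent
  · have hk : delivered A ys t = k := by omega
    exact ⟨by omega, hk, hk ▸ hsent.1, hsent.2⟩
  · omega

lemma queueDec_eq_of_lt_delivered [Inhabited α] {b : ℕ → α} {k n : ℕ}
    (hys : ∀ t < n, ∀ x ∈ ys t, x = queueEnc A t ys b) (h : k < delivered A ys n) :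
    queueDec A ys k = b k := by
  obtain ⟨hlt, hdel, hA, hsome⟩ := deliveryTime_spec h
  obtain ⟨x, hx⟩ := Option.isSome_iff_exists.1 hsome
  rw [queueDec, hx, Option.getD_some, hys _ hlt x hx, queueEnc, hdel, if_pos hA]

lemma unerased_self (n : ℕ) : unerased ys n n = 0 := by
  simp only [unerased, card_eq_zero, filter_eq_empty_iff, mem_range]
  omega

lemma unerased_succ {T n : ℕ} (hT : T ≤ n) :
    unerased ys T (n + 1) = unerased ys T n + if (ys n).isSome then 1 else 0 := by
  simp only [unerased, card_filter, sum_range_succ, hT, true_and]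

/-- The time `T` is the last one, up to `n`, at which the queue was empty. -/
lemma exists_add_unerased_le_delivered (hA : A 0 = 0) (ys : ℕ → Option α) (n : ℕ) :
    ∃ T ≤ n, A T + unerased ys T n ≤ delivered A ys n := by
  induction n with
  | zero => exact ⟨0, le_rfl, by simp [unerased, delivered, hA]⟩
  | succ n ih =>
    by_cases hbusy : delivered A ys n < A (n + 1)
    · obtain ⟨T, hT, hle⟩ := ih
      refine ⟨T, hT.trans n.le_succ, ?_⟩
      simp only [unerased_succ hT, delivered, hbusy, true_and]
      split_ifs <;> omega
    · refine ⟨n + 1, le_rfl, ?_⟩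
      simp only [unerased_self, delivered, hbusy, false_and, if_false]
      omega

end Queue

section ErasureChannel

open Finset

variable {β : ℝ}

lemma becChannel_nonneg (hβ0 : 0 ≤ β) (hβ1 : β ≤ 1) (x : Bool) (y : Option Bool) :
    0 ≤ becChannel β x y := by
  unfold becChannel
  split_ifs <;> linarith

lemma eq_of_becChannel_some_ne_zero {x x' : Bool} (h : becChannel β x (some x') ≠ 0) : x' = x := by
  by_contra hne
  simp [becChannel, hne] at h

lemma sum_becChannel_mul (β : ℝ) (x : Bool) (f : Option Bool → ℝ) :
    ∑ y, becChannel β x y * f y = β * f none + (1 - β) * f (some x) := by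
  cases x <;> simp [Fintype.sum_option, becChannel]

lemma feedbackExpect_pow_unerased (β z : ℝ) {enc : ℕ → (ℕ → Option Bool) → Bool}
    (henc : IsCausal enc) (T n : ℕ) :
    feedbackExpect (becChannel β) enc n (fun ys => z ^ unerased ys T n) =
      (β + (1 - β) * z) ^ (n - T) := by
  have hstep (t : ℕ) (x : Bool) :
      ∑ v, becChannel β x v * (if T ≤ t ∧ v.isSome then z else 1) =
        if T ≤ t then β + (1 - β) * z else 1 := by
    rw [sum_becChannel_mul]
    split_ifs <;> simp_all
  have hslots : {t ∈ range n | T ≤ t} = Ico T n := by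
    ext t
    simp [and_comm]
  calc feedbackExpect (becChannel β) enc n (fun ys => z ^ unerased ys T n)
    _ = ∏ t ∈ range n, if T ≤ t then β + (1 - β) * z else 1 := by
        simp only [unerased, ← prod_const, prod_filter]
        exact feedbackExpect_prod henc hstep n
    _ = (β + (1 - β) * z) ^ (n - T) := by
        rw [← prod_filter, hslots, prod_const, Nat.card_Ico]

end ErasureChannel

section Divergence

open Real InformationTheory

lemma klBin_self (p : ℝ) : klBin p p = 0 := by
  have hlog (x : ℝ) : log (x / x) = 0 := by
    obtain rfl | hx := eq_or_ne x 0
    · simp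
    · simp [hx]
  simp [klBin, hlog]

lemma klBin_eq_klFun (p : ℝ) {q : ℝ} (hq0 : q ≠ 0) (hq1 : q ≠ 1) :
    klBin p q = q * klFun (p / q) + (1 - q) * klFun ((1 - p) / (1 - q)) := by
  have hq1' : 1 - q ≠ 0 := sub_ne_zero.2 hq1.symm
  simp only [klBin, klFun_apply]
  field_simp
  ring

lemma klBin_nonneg {p q : ℝ} (hp0 : 0 ≤ p) (hp1 : p ≤ 1) (hq0 : 0 < q) (hq1 : q < 1) :
    0 ≤ klBin p q := by
  have hq1' : 0 < 1 - q := sub_pos.2 hq1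
  rw [klBin_eq_klFun p hq0.ne' hq1.ne]
  exact add_nonneg (mul_nonneg hq0.le (klFun_nonneg (div_nonneg hp0 hq0.le)))
    (mul_nonneg hq1'.le (klFun_nonneg (div_nonneg (sub_nonneg.2 hp1) hq1'.le)))

lemma klBin_eq_klBin_add (p : ℝ) {q r : ℝ} (hq0 : q ≠ 0) (hq1 : q ≠ 1) (hr0 : r ≠ 0)
    (hr1 : r ≠ 1) :
    klBin p q = klBin p r + (p * log (r / q) + (1 - p) * log ((1 - r) / (1 - q))) := by
  have hsplit {x y z : ℝ} (hy : y ≠ 0) (hz : z ≠ 0) :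
      x * log (x / z) = x * log (x / y) + x * log (y / z) := by
    obtain rfl | hx := eq_or_ne x 0
    · simp
    · rw [log_div hx hz, log_div hx hy, log_div hy hz]
      ring
  rw [klBin, klBin, hsplit hr0 hq0, hsplit (sub_ne_zero.2 hr1.symm) (sub_ne_zero.2 hq1.symm)]
  ring

end Divergence

section CumulantGeneratingFunction

open Real Set

variable {β : ℝ}

/-- The Laplace transform `𝔼 e^{-sN}` of the indicator `N` of an unerased output. -/
def becMgf (β s : ℝ) : ℝ := β + (1 - β) * exp (-s)

/-- The Chernoff exponent `Λ(s) = -log 𝔼 e^{-sN}` of the indicator `N` of an unerased output. -/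
def becCgf (β s : ℝ) : ℝ := -log (becMgf β s)

/-- The probability of an unerased output under the law tilted by `e^{-sN}`, which is `Λ'(s)`. -/
def becTilt (β s : ℝ) : ℝ := (1 - β) * exp (-s) / becMgf β s

lemma becMgf_pos (hβ0 : 0 < β) (hβ1 : β ≤ 1) (s : ℝ) : 0 < becMgf β s :=
  add_pos_of_pos_of_nonneg hβ0 (mul_nonneg (sub_nonneg.2 hβ1) (exp_pos _).le)

lemma becCgf_zero (β : ℝ) : becCgf β 0 = 0 := by simp [becCgf, becMgf]

lemma exp_neg_becCgf (hβ0 : 0 < β) (hβ1 : β ≤ 1) (s : ℝ) : exp (-becCgf β s) = becMgf β s := by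
  rw [becCgf, neg_neg, exp_log (becMgf_pos hβ0 hβ1 s)]

lemma one_sub_becTilt (hβ0 : 0 < β) (hβ1 : β ≤ 1) (s : ℝ) :
    1 - becTilt β s = β / becMgf β s := by
  have hz := (becMgf_pos hβ0 hβ1 s).ne'
  rw [becTilt, eq_div_iff hz, sub_mul, div_mul_cancel₀ _ hz, becMgf]
  ring

lemma becTilt_pos (hβ0 : 0 < β) (hβ1 : β < 1) (s : ℝ) : 0 < becTilt β s :=
  div_pos (mul_pos (sub_pos.2 hβ1) (exp_pos _)) (becMgf_pos hβ0 hβ1.le s)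

lemma becTilt_lt_one (hβ0 : 0 < β) (hβ1 : β ≤ 1) (s : ℝ) : becTilt β s < 1 :=
  sub_pos.1 (one_sub_becTilt hβ0 hβ1 s ▸ div_pos hβ0 (becMgf_pos hβ0 hβ1 s))

lemma becTilt_strictAnti (hβ0 : 0 < β) (hβ1 : β < 1) : StrictAnti (becTilt β) := by
  intro s s' hs
  have hMgf : becMgf β s' < becMgf β s := by
    have := sub_pos.2 hβ1
    unfold becMgf
    gcongr
  have := div_lt_div_of_pos_left hβ0 (becMgf_pos hβ0 hβ1.le s') hMgf
  rw [← one_sub_becTilt hβ0 hβ1.le, ← one_sub_becTilt hβ0 hβ1.le] at this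
  linarith

lemma hasDerivAt_becCgf (hβ0 : 0 < β) (hβ1 : β ≤ 1) (s : ℝ) :
    HasDerivAt (becCgf β) (becTilt β s) s := by
  have h := ((((hasDerivAt_neg s).exp).const_mul (1 - β)).const_add β).log
    (becMgf_pos hβ0 hβ1 s).ne' |>.neg
  rwa [mul_neg_one, mul_neg, neg_div, neg_neg] at h

lemma continuous_becCgf (hβ0 : 0 < β) (hβ1 : β ≤ 1) : Continuous (becCgf β) :=
  continuous_iff_continuousAt.2 fun s => (hasDerivAt_becCgf hβ0 hβ1 s).continuousAt

lemma strictConcaveOn_becCgf (hβ0 : 0 < β) (hβ1 : β < 1) :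
    StrictConcaveOn ℝ univ (becCgf β) := by
  refine StrictAnti.strictConcaveOn_univ_of_deriv (continuous_becCgf hβ0 hβ1.le) ?_
  rw [funext fun s => (hasDerivAt_becCgf hβ0 hβ1.le s).deriv]
  exact becTilt_strictAnti hβ0 hβ1

/-- A form of the Donsker–Varadhan variational formula: the divergence on the right is nonnegative
and vanishes at `p = becTilt β s`. -/
lemma klBin_eq_klBin_becTilt_add (hβ0 : 0 < β) (hβ1 : β < 1) (p s : ℝ) :
    klBin p (1 - β) = klBin p (becTilt β s) + (becCgf β s - s * p) := by
  have hz := becMgf_pos hβ0 hβ1.le s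
  have hβ1' : 0 < 1 - β := sub_pos.2 hβ1
  have hone : becTilt β s / (1 - β) = exp (-s) / becMgf β s := by
    rw [becTilt]
    field_simp
  have hzero : (1 - becTilt β s) / (1 - (1 - β)) = (becMgf β s)⁻¹ := by
    rw [one_sub_becTilt hβ0 hβ1.le, sub_sub_cancel]
    field_simp
  rw [klBin_eq_klBin_add p hβ1'.ne' (by linarith) (becTilt_pos hβ0 hβ1 s).ne'
    (becTilt_lt_one hβ0 hβ1.le s).ne, hone, hzero, log_div (exp_pos _).ne' hz.ne', log_exp, log_inv,
    becCgf]
  ring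

variable {R' r : ℝ}

lemma becTilt_lt_of_becCgf_eq (hβ0 : 0 < β) (hβ1 : β < 1) (hr : 0 < r)
    (hroot : becCgf β r = r * R') : becTilt β r < R' := by
  have h := (strictConcaveOn_becCgf hβ0 hβ1).lt_slope_of_hasDerivAt (mem_univ 0) (mem_univ r) hr
    (hasDerivAt_becCgf hβ0 hβ1.le r)
  rwa [slope_def_field, becCgf_zero, hroot, sub_zero, sub_zero, mul_div_cancel_left₀ _ hr.ne'] at h

lemma mul_lt_becCgf_of_lt_root (hβ0 : 0 < β) (hβ1 : β < 1) (hroot : becCgf β r = r * R') {s : ℝ}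
    (hs : 0 < s) (hsr : s < r) : s * R' < becCgf β s := by
  have hr := hs.trans hsr
  have h := (strictConcaveOn_becCgf hβ0 hβ1).secant_strict_mono (mem_univ 0) (mem_univ s)
    (mem_univ r) hs.ne' hr.ne' hsr
  rwa [becCgf_zero, hroot, sub_zero, sub_zero, sub_zero, sub_zero, mul_div_cancel_left₀ _ hr.ne',
    lt_div_iff₀ hs, mul_comm] at h

lemma EaBec_eq_mul_of_becCgf_eq (hβ0 : 0 < β) (hβ1 : β < 1) (hR0 : 0 < R') (hR1 : R' ≤ 1)
    (hr : 0 < r) (hroot : becCgf β r = r * R') : EaBec β R' = r * R' := by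
  refine IsLeast.csInf_eq ⟨⟨becTilt β r / R', (div_pos (becTilt_pos hβ0 hβ1 r) hR0).le,
    (div_lt_one hR0).2 (becTilt_lt_of_becCgf_eq hβ0 hβ1 hr hroot), ?_⟩, ?_⟩
  · have hlt := becTilt_lt_of_becCgf_eq hβ0 hβ1 hr hroot
    rw [div_mul_cancel₀ _ hR0.ne', klBin_eq_klBin_becTilt_add hβ0 hβ1 _ r, klBin_self, hroot,
      eq_div_iff (sub_pos.2 ((div_lt_one hR0).2 hlt)).ne']
    field_simp
    ring
  · rintro _ ⟨lam, hlam0, hlam1, rfl⟩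
    have hgibbs : 0 ≤ klBin (lam * R') (becTilt β r) :=
      klBin_nonneg (mul_nonneg hlam0 hR0.le) (mul_le_one₀ hlam1.le hR0.le hR1)
        (becTilt_pos hβ0 hβ1 r) (becTilt_lt_one hβ0 hβ1.le r)
    rw [le_div_iff₀ (sub_pos.2 hlam1), klBin_eq_klBin_becTilt_add hβ0 hβ1 _ r, hroot]
    linarith

lemma exists_pos_mul_le_becCgf (hβ0 : 0 < β) (hR0 : 0 < R') (hR1 : R' < 1 - β) :
    ∃ s, 0 < s ∧ s * R' ≤ becCgf β s := by
  have hβ1 : β ≤ 1 := by linarith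
  have hq : 0 < 1 - β := hR0.trans hR1
  -- At this `s` the bound `(1 - β) s e⁻ˢ ≤ 1 - becMgf β s` has left-hand side `s R'`.
  set s := log ((1 - β) / R') with hs
  have hexp : (1 - β) * exp (-s) = R' := by
    rw [hs, exp_neg, exp_log (div_pos hq hR0)]
    field_simp
  refine ⟨s, log_pos ((one_lt_div hR0).2 hR1), ?_⟩
  have hlog : log (becMgf β s) ≤ becMgf β s - 1 := log_le_sub_one_of_pos (becMgf_pos hβ0 hβ1 s)
  have hadd : (s + 1) * R' ≤ 1 - β := by
    calc (s + 1) * R' ≤ exp s * R' := by gcongr; exact add_one_le_exp s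
      _ = 1 - β := by rw [← hexp, mul_left_comm, ← exp_add, add_neg_cancel, exp_zero, mul_one]
  rw [becMgf, hexp] at hlog
  rw [becCgf, becMgf, hexp]
  linarith

lemma exists_becCgf_eq_mul (hβ0 : 0 < β) (hR0 : 0 < R') (hR1 : R' < 1 - β) :
    ∃ r, 0 < r ∧ becCgf β r = r * R' := by
  have hβ1 : β ≤ 1 := by linarith
  obtain ⟨s, hs, hsR⟩ := exists_pos_mul_le_becCgf hβ0 hR0 hR1
  set S := s + -log β / R' with hS
  have hsS : s ≤ S := le_add_of_nonneg_right <|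
    div_nonneg (neg_nonneg.2 (log_nonpos hβ0.le hβ1)) hR0.le
  have hSR : becCgf β S ≤ S * R' := by
    have hbound : becCgf β S ≤ -log β := neg_le_neg <| log_le_log hβ0 <|
      le_add_of_nonneg_right (mul_nonneg (sub_nonneg.2 hβ1) (exp_pos _).le)
    have hSmul : S * R' = s * R' - log β := by
      rw [hS]
      field_simp
      ring
    linarith [mul_pos hs hR0]
  have hcont : Continuous fun s => becCgf β s - s * R' :=
    (continuous_becCgf hβ0 hβ1).sub (continuous_mul_const R')
  obtain ⟨r, hr, hroot⟩ := intermediate_value_Icc' hsS hcont.continuousOn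
    ⟨sub_nonpos.2 hSR, sub_nonneg.2 hsR⟩
  exact ⟨r, hs.trans_le hr.1, sub_eq_zero.1 hroot⟩

lemma exists_chernoff_parameter (hβ0 : 0 < β) (hβ1 : β < 1) (hR0 : 0 < R') (hR1 : R' < 1 - β)
    {ε : ℝ} (hε : 0 < ε) :
    ∃ s, 0 < s ∧ (1 - ε) * EaBec β R' < s * R' ∧ s * R' < becCgf β s := by
  obtain ⟨r, hr, hroot⟩ := exists_becCgf_eq_mul hβ0 hR0 hR1
  have hbelow : max 0 ((1 - ε) * r) < r := max_lt hr (by nlinarith)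
  obtain ⟨s, hs, hsr⟩ := exists_between hbelow
  obtain ⟨hs0, hsε⟩ := max_lt_iff.1 hs
  refine ⟨s, hs0, ?_, mul_lt_becCgf_of_lt_root hβ0 hβ1 hroot hs0 hsr⟩
  rw [EaBec_eq_mul_of_becCgf_eq hβ0 hβ1 hR0 (by linarith) hr hroot, ← mul_assoc]
  gcongr

end CumulantGeneratingFunction

section ErrorBound

open Finset Real

variable {β R' s : ℝ}

/-- The number of bits of a rate-`R'` source that arrive in the first `t` time slots. -/
def arrivals (R' : ℝ) (t : ℕ) : ℕ := ⌊R' * t⌋₊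

lemma isFeedbackEncoder_queueEnc (R' : ℝ) :
    IsFeedbackEncoder R' (queueEnc (α := Bool) (arrivals R')) :=
  fun _ _ _ _ _ hys hb => queueEnc_congr _ hys fun k hk => hb k (by simpa [arrivals] using hk)

/-- The index `T` runs over the possible last times at which the queue was empty. -/
lemma one_le_sum_exp_of_delivered_lt {α : Type*} (hR0 : 0 < R') (hs : 0 ≤ s) {ys : ℕ → Option α}
    {i n : ℕ} (h : delivered (arrivals R') ys n < i) :
    1 ≤ ∑ T ∈ range ⌈i / R'⌉₊, exp (s * (i - R' * T)) * exp (-s) ^ unerased ys T n := by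
  obtain ⟨T, -, hle⟩ :=
    exists_add_unerased_le_delivered (A := arrivals R') (by simp [arrivals]) ys n
  have hlate : R' * T + unerased ys T n < i := by
    have hfloor : R' * T < arrivals R' T + 1 := Nat.lt_floor_add_one _
    have hcount : (arrivals R' T + 1 + unerased ys T n : ℝ) ≤ i := by
      exact_mod_cast (by omega : arrivals R' T + 1 + unerased ys T n ≤ i)
    linarith
  have hT : T ∈ range ⌈i / R'⌉₊ := by
    rw [mem_range, Nat.lt_ceil, lt_div_iff₀ hR0, mul_comm]
    linarith [(unerased ys T n).cast_nonneg (α := ℝ)]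
  calc (1 : ℝ) ≤ exp (s * (i - R' * T - unerased ys T n)) :=
        one_le_exp (mul_nonneg hs (by linarith))
    _ = exp (s * (i - R' * T)) * exp (-s) ^ unerased ys T n := by
        rw [← exp_nat_mul, ← exp_add]
        ring_nf
    _ ≤ _ := single_le_sum (f := fun T : ℕ => exp (s * (i - R' * T)) * exp (-s) ^ unerased ys T n)
        (fun _ _ => by positivity) hT

lemma feedbackExpect_queueDec_ne_le (hβ0 : 0 ≤ β) (hβ1 : β ≤ 1) (hR0 : 0 < R') (hs : 0 ≤ s)
    (b : ℕ → Bool) {i : ℕ} (hi : 1 ≤ i) (n : ℕ) :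
    feedbackExpect (becChannel β) (fun t ys => queueEnc (arrivals R') t ys b) n
        (fun ys => if queueDec (arrivals R') ys (i - 1) = b (i - 1) then 0 else 1) ≤
      ∑ T ∈ range ⌈i / R'⌉₊, exp (s * (i - R' * T)) * becMgf β s ^ (n - T) := by
  have hcausal : IsCausal fun t ys => queueEnc (arrivals R') t ys b := fun t _ _ hys =>
    queueEnc_congr _ hys fun _ _ => rfl
  simp only [becMgf, ← feedbackExpect_pow_unerased β _ hcausal, ← feedbackExpect_sum_mul]
  refine feedbackExpect_mono (becChannel_nonneg hβ0 hβ1) fun ys hys => ?_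
  split_ifs with hdec
  · positivity
  · refine one_le_sum_exp_of_delivered_lt hR0 hs ?_
    by_contra! hdel
    refine hdec (queueDec_eq_of_lt_delivered (n := n) (fun t ht x hx => ?_) (by omega))
    exact eq_of_becChannel_some_ne_zero (Option.mem_def.1 hx ▸ hys t ht)

lemma geom_sum_le_inv_one_sub {x : ℝ} (hx0 : 0 ≤ x) (hx1 : x < 1) (n : ℕ) :
    ∑ j ∈ range n, x ^ j ≤ (1 - x)⁻¹ := by
  rw [← tsum_geometric_of_lt_one hx0 hx1]
  exact (summable_geometric_of_lt_one hx0 hx1).sum_le_tsum _ fun j _ => by positivity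

lemma sum_exp_mul_exp_pow_le {a : ℝ} (hR0 : 0 < R') (hs : 0 ≤ s) (ha : s * R' < a) (i d : ℕ) :
    ∑ T ∈ range ⌈i / R'⌉₊, exp (s * (i - R' * T)) * exp (-a) ^ (⌈i / R'⌉₊ + d - T) ≤
      (1 - exp (-(a - s * R')))⁻¹ * exp (-d * a) := by
  set C := ⌈i / R'⌉₊
  set x := exp (-(a - s * R')) with hx
  have hx1 : x < 1 := exp_lt_one_iff.2 (by linarith)
  have hiC : s * i ≤ s * (C * R') := by
    gcongr
    exact (div_le_iff₀ hR0).1 (Nat.le_ceil _)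
  calc _ ≤ ∑ T ∈ range C, x ^ (C - 1 - T) * exp (-d * a) := by
        refine sum_le_sum fun T hT => ?_
        have hTC := mem_range.1 hT
        rw [hx, ← exp_nat_mul, ← exp_nat_mul, ← exp_add, ← exp_add, exp_le_exp,
          Nat.cast_sub (by omega), Nat.cast_sub (by omega), Nat.cast_sub (by omega)]
        push_cast
        linarith
    _ = (∑ j ∈ range C, x ^ j) * exp (-d * a) := by rw [← sum_mul, sum_range_reflect]
    _ ≤ _ := by
        gcongr
        exact geom_sum_le_inv_one_sub (exp_pos _).le hx1 C

lemma bitErrProbFb_queue_le (hβ0 : 0 < β) (hβ1 : β ≤ 1) (hR0 : 0 < R') (hs : 0 ≤ s)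
    (hsR : s * R' < becCgf β s) {i : ℕ} (hi : 1 ≤ i) (d M : ℕ) :
    bitErrProbFb (becChannel β) (queueEnc (arrivals R')) (⌈i / R'⌉₊ + d) M
        (fun y => queueDec (arrivals R') (extendY y) (i - 1)) i ≤
      (1 - exp (-(becCgf β s - s * R')))⁻¹ * exp (-d * becCgf β s) := by
  refine bitErrProbFb_le_of_forall_feedbackExpect_le
    (dec := fun ys => queueDec (arrivals R') ys (i - 1)) (fun b => ?_) M
  refine (feedbackExpect_queueDec_ne_le hβ0.le hβ1 hR0 hs b hi _).trans ?_
  rw [← exp_neg_becCgf hβ0 hβ1]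
  exact sum_exp_mul_exp_pow_le hR0 hs hsR i d

open Filter Topology in
lemma eventually_const_mul_exp_neg_mul_le (K : ℝ) {a c : ℝ} (hca : c < a) :
    ∀ᶠ d : ℕ in atTop, K * exp (-d * a) ≤ exp (-d * c) := by
  have hlim : Tendsto (fun d : ℕ => K * exp (-(a - c)) ^ d) atTop (𝓝 0) := by
    simpa using (tendsto_pow_atTop_nhds_zero_of_lt_one (exp_pos _).le
      (exp_lt_one_iff.2 (by linarith))).const_mul K
  filter_upwards [hlim.eventually_le_const zero_lt_one] with d hd
  calc K * exp (-d * a) = K * exp (-(a - c)) ^ d * exp (-d * c) := by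
        rw [← exp_nat_mul, mul_assoc, ← exp_add]
        ring_nf
    _ ≤ 1 * exp (-d * c) := by gcongr
    _ = exp (-d * c) := one_mul _

end ErrorBound

/-- **Theorem 3 (achievability for the BEC).**  Fix an erasure probability `β ∈ (0,1)`
and a rate `0 < R' < 1 - β` bits per channel use.  For every `ε > 0` there exists `d₀`
such that for every delay `d ≥ d₀` there exist a rate-`R` encoder with noiseless
feedback for `BEC(β)` and a delay-`d` decoder such that every (1-indexed) message bit
`i ≥ 1` satisfies `P(\hat B_i(⌈i/R'⌉ + d) ≠ B_i) ≤ exp(-d (1-ε) E_a^{bec}(R'))`. -/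
theorem bec_fixed_delay_achievability
    (β R' : ℝ) (hβ0 : 0 < β) (hβ1 : β < 1) (hR'0 : 0 < R') (hR'1 : R' < 1 - β) :
    ∀ ε : ℝ, 0 < ε → ∃ d0 : ℕ, ∀ d : ℕ, d0 ≤ d →
      ∃ (enc : ℕ → (ℕ → Option Bool) → (ℕ → Bool) → Bool)
        (dec : ∀ i : ℕ, (Fin (Nat.ceil ((i : ℝ) / R') + d) → Option Bool) → Bool),
        IsFeedbackEncoder R' enc ∧
        ∀ i : ℕ, 1 ≤ i →
          bitErrProbFb (becChannel β) enc (Nat.ceil ((i : ℝ) / R') + d)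
            (max i (Nat.floor (R' * ((Nat.ceil ((i : ℝ) / R') + d : ℕ) : ℝ))))
            (dec i) i
          ≤ Real.exp (-(d : ℝ) * (1 - ε) * EaBec β R') := by
  intro ε hε
  obtain ⟨s, hs, hE, hsR⟩ := exists_chernoff_parameter hβ0 hβ1 hR'0 hR'1 hε
  obtain ⟨d₀, hd₀⟩ := Filter.eventually_atTop.1 <| eventually_const_mul_exp_neg_mul_le
    (1 - Real.exp (-(becCgf β s - s * R')))⁻¹ (hE.trans hsR)
  refine ⟨d₀, fun d hd => ⟨queueEnc (arrivals R'),
    fun i y => queueDec (arrivals R') (extendY y) (i - 1), isFeedbackEncoder_queueEnc R',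
    fun i hi => ?_⟩⟩
  rw [mul_assoc]
  exact (bitErrProbFb_queue_le hβ0 hβ1.le hR'0 hs.le hsR hi d _).trans (hd₀ d hd)

end
end

section
/- (Reliability-dependent capacity of the BEC, equation (becanytimecapacity).) Let beta in (0,1) and eta > 0. Define alpha = eta - log_2(1 + beta (2^eta - 1)) and R' = alpha/eta. Then alpha > 0, 2^alpha beta < 1, and R' = alpha / (alpha + log_2((1 - beta)/(1 - 2^alpha beta))); that is, eliminating the parameter eta from the parametric description (alpha, R') = (eta - log_2(1 + beta(2^eta - 1)), (eta - log_2(1 + beta(2^eta - 1)))/eta) yields R' = C'(alpha) with C'(alpha) = alpha / (alpha + log_2((1 - beta)/(1 - 2^alpha beta))). -/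
noncomputable section

/-!
Exponentiating `α = η - log_b D` with `D = 1 + β (b ^ η - 1)` gives `b ^ α = b ^ η / D`. Since
`D - β b ^ η = 1 - β`, this means `1 - β b ^ α = (1 - β) / D`, so `D` is a function of `α` alone,
and `η = α + log_b D` is then recovered from `α`.
-/

/-- The Gallager function `E₀(η) = η - log_b (1 + β (b ^ η - 1))` of the binary erasure channel with
erasure probability `β`. The base `b` sets the unit of information; `b = 2` measures in bits. -/
def becGallager (b β η : ℝ) : ℝ :=
  η - Real.logb b (1 + β * (b ^ η - 1))

/-- The reliability-dependent capacity `C'(α)` of the binary erasure channel with erasure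
probability `β`: the supremal rate sustainable with fixed-delay reliability `α`, both in base-`b`
units. For `1 < b` and `0 < β < 1` it is meaningful when `0 < α` and `b ^ α * β < 1`; outside this
range the quotients and the logarithm may take junk values. -/
def becReliabilityCapacity (b β α : ℝ) : ℝ :=
  α / (α + Real.logb b ((1 - β) / (1 - b ^ α * β)))

section BEC

variable {b β η : ℝ}

lemma one_add_mul_sub_one_pos {x : ℝ} (hβ0 : 0 ≤ β) (hβ1 : β < 1) (hx : 0 < x) :
    0 < 1 + β * (x - 1) :=
  calc
    0 < (1 - β) + β * x := add_pos_of_pos_of_nonneg (sub_pos.2 hβ1) (mul_nonneg hβ0 hx.le)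
    _ = 1 + β * (x - 1) := by ring

lemma one_add_mul_sub_one_lt {x : ℝ} (hβ1 : β < 1) (hx : 1 < x) : 1 + β * (x - 1) < x :=
  calc
    1 + β * (x - 1) < 1 + (x - 1) := by
      gcongr
      exact mul_lt_of_lt_one_left (sub_pos.2 hx) hβ1
    _ = x := by ring

lemma becGallager_pos (hb : 1 < b) (hβ0 : 0 ≤ β) (hβ1 : β < 1) (hη : 0 < η) :
    0 < becGallager b β η := by
  have hpow : 1 < b ^ η := Real.one_lt_rpow hb hη
  have hD : 0 < 1 + β * (b ^ η - 1) := one_add_mul_sub_one_pos hβ0 hβ1 (zero_lt_one.trans hpow)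
  rw [becGallager, sub_pos, Real.logb_lt_iff_lt_rpow hb hD]
  exact one_add_mul_sub_one_lt hβ1 hpow

lemma rpow_becGallager (hb0 : 0 < b) (hb1 : b ≠ 1) (hD : 0 < 1 + β * (b ^ η - 1)) :
    b ^ becGallager b β η = b ^ η / (1 + β * (b ^ η - 1)) := by
  rw [becGallager, Real.rpow_sub hb0, Real.rpow_logb hb0 hb1 hD]

lemma one_sub_rpow_becGallager_mul (hb0 : 0 < b) (hb1 : b ≠ 1)
    (hD : 0 < 1 + β * (b ^ η - 1)) :
    1 - b ^ becGallager b β η * β = (1 - β) / (1 + β * (b ^ η - 1)) := by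
  rw [rpow_becGallager hb0 hb1 hD]
  field_simp
  ring

lemma rpow_becGallager_mul_lt_one (hb0 : 0 < b) (hb1 : b ≠ 1) (hβ0 : 0 ≤ β) (hβ1 : β < 1) :
    b ^ becGallager b β η * β < 1 := by
  have hD : 0 < 1 + β * (b ^ η - 1) :=
    one_add_mul_sub_one_pos hβ0 hβ1 (Real.rpow_pos_of_pos hb0 η)
  rw [← sub_pos, one_sub_rpow_becGallager_mul hb0 hb1 hD]
  exact div_pos (sub_pos.2 hβ1) hD

lemma becGallager_add_logb (hb0 : 0 < b) (hb1 : b ≠ 1) (hβ : β ≠ 1)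
    (hD : 0 < 1 + β * (b ^ η - 1)) :
    becGallager b β η + Real.logb b ((1 - β) / (1 - b ^ becGallager b β η * β)) = η := by
  rw [one_sub_rpow_becGallager_mul hb0 hb1 hD, div_div_cancel₀ (sub_ne_zero.2 hβ.symm),
    becGallager, sub_add_cancel]

lemma becReliabilityCapacity_becGallager (hb0 : 0 < b) (hb1 : b ≠ 1) (hβ : β ≠ 1)
    (hD : 0 < 1 + β * (b ^ η - 1)) :
    becReliabilityCapacity b β (becGallager b β η) = becGallager b β η / η := by
  rw [becReliabilityCapacity, becGallager_add_logb hb0 hb1 hβ hD]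

end BEC

/-- **Reliability-dependent capacity of the BEC.**  Let `β ∈ (0,1)` and `η > 0`.
With `α = η - log₂(1 + β(2^η - 1))` and `R' = α/η`, one has `α > 0`, `2^α β < 1`, and
`R' = α / (α + log₂((1-β)/(1 - 2^α β)))`; i.e. eliminating the parameter `η` from the
parametric description of the BEC uncertainty-focusing bound yields `R' = C'(α)` with
`C'(α) = α / (α + log₂((1-β)/(1-2^α β)))`. -/
theorem bec_reliability_capacity
    (β η α R' : ℝ) (hβ0 : 0 < β) (hβ1 : β < 1) (hη : 0 < η)
    (hα : α = η - Real.logb 2 (1 + β * ((2 : ℝ) ^ η - 1)))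
    (hR' : R' = α / η) :
    0 < α ∧ (2 : ℝ) ^ α * β < 1 ∧
      R' = α / (α + Real.logb 2 ((1 - β) / (1 - (2 : ℝ) ^ α * β))) := by
  obtain rfl : α = becGallager 2 β η := hα
  have hD : 0 < 1 + β * ((2 : ℝ) ^ η - 1) :=
    one_add_mul_sub_one_pos hβ0.le hβ1 (Real.rpow_pos_of_pos two_pos η)
  refine ⟨becGallager_pos one_lt_two hβ0.le hβ1 hη,
    rpow_becGallager_mul_lt_one two_pos (OfNat.ofNat_ne_one 2) hβ0.le hβ1, ?_⟩
  exact hR'.trans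
    (becReliabilityCapacity_becGallager two_pos (OfNat.ofNat_ne_one 2) hβ1.ne hD).symm

end
end

section
/- (Lemma 3, window dependence of feedforward decoders.) Let P be a DMC, R > 0 with R' = R/ln 2 < 1, and let E be a rate-R encoder without feedback. Fix a bit index i and delay d, and let D_i : {0,1}^{i-1} x Y^{ceil(i/R')+d} -> {0,1} be any delay-d decoder with feedforward for bit i. Then there exists a decoder D^f_i : {0,1}^{i-1} x Y^{d+1} -> {0,1} depending only on the past message bits B_1^{i-1} and the recent channel outputs Y_{ceil(i/R')}^{ceil(i/R')+d}, such that P(B_i != D^f_i(B_1^{i-1}, Y_{ceil(i/R')}^{ceil(i/R')+d})) <= P(B_i != D_i(B_1^{i-1}, Y_1^{ceil(i/R')+d})), where the message bits are i.i.d. fair coin flips. -/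
open scoped BigOperators

noncomputable section

/-- `P` is a stochastic matrix (a DMC). -/
def IsStochastic {X Y : Type} [Fintype X] [Fintype Y] (P : X → Y → ℝ) : Prop :=
  ∀ x, (∀ y, 0 ≤ P x y) ∧ ∑ y, P x y = 1

/-- A rate-`R` encoder without feedback: the channel input at the (1-indexed) time
`t+1` may depend only on the first `⌊R'·(t+1)⌋` message bits. -/
def IsNoFeedbackEncoder {X : Type} (R' : ℝ) (enc : ℕ → (ℕ → Bool) → X) : Prop :=
  ∀ t : ℕ, ∀ b b' : ℕ → Bool,
    (∀ k, k < Nat.floor (R' * ((t : ℝ) + 1)) → b k = b' k) → enc t b = enc t b'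

/-- The probability that a feedforward decoder `dec` (which sees the past message bits
in addition to the channel outputs) errs on the (1-indexed) message bit `i`, computed
under the explicit finite product law `P(b,y) = 2^{-M} ∏_t p_{y_t | enc_t(b)}` on `M`
i.i.d. fair message bits and `n` channel outputs. -/
def ffBitErrProb {X Y : Type} [Fintype X] [Fintype Y] (P : X → Y → ℝ)
    (enc : ℕ → (ℕ → Bool) → X) (n M i : ℕ)
    (dec : (ℕ → Bool) → (Fin n → Y) → Bool) : ℝ :=
  ∑ b : Fin M → Bool, ∑ y : Fin n → Y,
    ((2 : ℝ) ^ M)⁻¹ * (∏ t : Fin n, P (enc t (extendB b)) (y t)) *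
      (if dec (extendB b) y = extendB b (i - 1) then 0 else 1)

/-!
The inputs before time `⌈i/R'⌉` are functions of the past message bits, which the decoder knows, so
given these bits the early outputs are noise independent of everything that follows. Drawing the
early outputs afresh from their conditional law therefore leaves the error probability unchanged.
That error probability is an average over the redrawn outputs, so for each past message some fixed
choice of early outputs does at least as well as the average.
-/

theorem exists_le_sum_mul_of_sum_eq_one {Z 𝕜 : Type*} [Fintype Z] [Semiring 𝕜] [LinearOrder 𝕜]
    [IsStrictOrderedRing 𝕜] {w : Z → 𝕜} (hw : ∀ z, 0 ≤ w z) (hw_sum : ∑ z, w z = 1) (f : Z → 𝕜) :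
    ∃ z₀, f z₀ ≤ ∑ z, w z * f z := by
  have : Nonempty Z := by
    by_contra! hZ
    simp at hw_sum
  obtain ⟨z₀, hz₀⟩ := Finite.exists_min f
  refine ⟨z₀, ?_⟩
  calc f z₀ = ∑ z, w z * f z₀ := by rw [← Finset.sum_mul, hw_sum, one_mul]
    _ ≤ ∑ z, w z * f z :=
      Finset.sum_le_sum fun z _ => mul_le_mul_of_nonneg_left (hz₀ z) (hw z)

theorem exists_sum_comp_le_sum_sum_mul {β κ Z 𝕜 : Type*} [Fintype β] [Fintype Z]
    [Semiring 𝕜] [LinearOrder 𝕜] [IsStrictOrderedRing 𝕜] (key : β → κ) {w : κ → Z → 𝕜}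
    (hw : ∀ k z, 0 ≤ w k z) (hw_sum : ∀ k, ∑ z, w k z = 1) (f : β → Z → 𝕜) :
    ∃ z : κ → Z, ∑ b, f b (z (key b)) ≤ ∑ b, ∑ z, w (key b) z * f b z := by
  classical
  choose z hz using fun k =>
    exists_le_sum_mul_of_sum_eq_one (hw k) (hw_sum k) fun z => ∑ b with key b = k, f b z
  refine ⟨z, ?_⟩
  have hmaps : ∀ b ∈ (Finset.univ : Finset β), key b ∈ Finset.univ.image key :=
    fun _ => Finset.mem_image_of_mem key
  rw [← Finset.sum_fiberwise_of_maps_to hmaps, ← Finset.sum_fiberwise_of_maps_to hmaps]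
  refine Finset.sum_le_sum fun k _ => ?_
  calc ∑ b with key b = k, f b (z (key b))
      = ∑ b with key b = k, f b (z k) :=
        Finset.sum_congr rfl fun b hb => by rw [(Finset.mem_filter.mp hb).2]
    _ ≤ ∑ z, w k z * ∑ b with key b = k, f b z := hz k
    _ = ∑ b with key b = k, ∑ z, w k z * f b z := by
        simp_rw [Finset.mul_sum]
        exact Finset.sum_comm
    _ = ∑ b with key b = k, ∑ z, w (key b) z * f b z :=
        Finset.sum_congr rfl fun b hb => by rw [(Finset.mem_filter.mp hb).2]

/-- The involution exchanging the coordinates in `s` of two families. It turns redrawing these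
coordinates independently into a change of variables. -/
def swapOn {ι Y : Type*} [DecidableEq ι] (s : Finset ι) : Equiv.Perm ((ι → Y) × (ι → Y)) :=
  Function.Involutive.toPerm (fun p => (s.piecewise p.2 p.1, s.piecewise p.1 p.2)) fun p => by
    ext t <;> by_cases ht : t ∈ s <;> simp [ht]

section ChannelLaw

variable {X Y ι : Type*} [Fintype ι]

/-- The memoryless law `∏ t, p_{y_t | x_t}` of the outputs `y` given the inputs `x`, for an
arbitrary finite set `ι` of times. -/
def channelLaw (P : X → Y → ℝ) (x : ι → X) (y : ι → Y) : ℝ :=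
  ∏ t, P (x t) (y t)

theorem channelLaw_mul_channelLaw_piecewise [DecidableEq ι] (P : X → Y → ℝ) {s : Finset ι}
    {x x' : ι → X} (hx : ∀ t ∈ s, x t = x' t) (y z : ι → Y) :
    channelLaw P x (s.piecewise z y) * channelLaw P x' (s.piecewise y z) =
      channelLaw P x y * channelLaw P x' z := by
  simp only [channelLaw, ← Finset.prod_mul_distrib]
  refine Finset.prod_congr rfl fun t _ => ?_
  by_cases ht : t ∈ s
  · simp only [Finset.piecewise_eq_of_mem _ _ _ ht, hx t ht, mul_comm]
  · simp only [Finset.piecewise_eq_of_notMem _ _ _ ht]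

end ChannelLaw

namespace IsStochastic

variable {X Y : Type} [Fintype X] [Fintype Y] {ι : Type*} [Fintype ι] {P : X → Y → ℝ}

theorem channelLaw_nonneg (hP : IsStochastic P) (x : ι → X) (y : ι → Y) : 0 ≤ channelLaw P x y :=
  Finset.prod_nonneg fun t _ => (hP (x t)).1 (y t)

variable [DecidableEq ι]

theorem sum_channelLaw (hP : IsStochastic P) (x : ι → X) : ∑ y, channelLaw P x y = 1 := by
  simp only [channelLaw, ← Fintype.prod_sum fun t y => P (x t) y, (hP _).2, Finset.prod_const_one]

theorem sum_channelLaw_resample (hP : IsStochastic P) {s : Finset ι} {x x' : ι → X}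
    (hx : ∀ t ∈ s, x t = x' t) (g : (ι → Y) → ℝ) :
    ∑ z, channelLaw P x' z * ∑ y, channelLaw P x y * g (s.piecewise z y) =
      ∑ y, channelLaw P x y * g y :=
  calc ∑ z, channelLaw P x' z * ∑ y, channelLaw P x y * g (s.piecewise z y)
      = ∑ p : (ι → Y) × (ι → Y),
          channelLaw P x p.1 * channelLaw P x' p.2 * g (s.piecewise p.2 p.1) := by
        simp only [Finset.mul_sum, Fintype.sum_prod_type_right, mul_left_comm, mul_assoc]
    _ = ∑ p : (ι → Y) × (ι → Y), channelLaw P x p.1 * channelLaw P x' p.2 * g p.1 :=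
        Fintype.sum_equiv (swapOn s) _ _ fun p =>
          congrArg (· * _) (channelLaw_mul_channelLaw_piecewise P hx p.1 p.2).symm
    _ = ∑ y, channelLaw P x y * g y := by
        simp only [Fintype.sum_prod_type, mul_right_comm, ← Finset.mul_sum, hP.sum_channelLaw,
          mul_one]

theorem exists_sum_channelLaw_piecewise_le (hP : IsStochastic P) {β κ : Type*} [Fintype β]
    {s : Finset ι} {x : β → ι → X} {x' : κ → ι → X} {key : β → κ}
    (hx : ∀ b, ∀ t ∈ s, x b t = x' (key b) t) (loss : β → (ι → Y) → ℝ) :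
    ∃ z : κ → ι → Y,
      ∑ b, ∑ y, channelLaw P (x b) y * loss b (s.piecewise (z (key b)) y) ≤
        ∑ b, ∑ y, channelLaw P (x b) y * loss b y := by
  obtain ⟨z, hz⟩ := exists_sum_comp_le_sum_sum_mul key
    (fun k => hP.channelLaw_nonneg (x' k)) (fun k => hP.sum_channelLaw (x' k))
    fun b z => ∑ y, channelLaw P (x b) y * loss b (s.piecewise z y)
  exact ⟨z, hz.trans_eq <| Finset.sum_congr rfl fun b _ =>
    hP.sum_channelLaw_resample (hx b) (loss b)⟩

end IsStochastic

theorem extendB_restrict (b : ℕ → Bool) {m k : ℕ} (hk : k < m) :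
    extendB (fun l : Fin m => b l) k = b k :=
  dif_pos hk

theorem IsNoFeedbackEncoder.eq_of_lt_ceil {X : Type} {R' : ℝ} {enc : ℕ → (ℕ → Bool) → X}
    (henc : IsNoFeedbackEncoder R' enc) (hR' : 0 < R') {i t : ℕ}
    (ht : t < ⌈((i + 1 : ℕ) : ℝ) / R'⌉₊ - 1) {b b' : ℕ → Bool} (hb : ∀ k, k < i → b k = b' k) :
    enc t b = enc t b' := by
  have hlt : ((t + 1 : ℕ) : ℝ) < ((i + 1 : ℕ) : ℝ) / R' := Nat.lt_ceil.mp (by omega)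
  have hfloor : ⌊R' * ((t : ℝ) + 1)⌋₊ < i + 1 := by
    rw [Nat.floor_lt (by positivity), ← lt_div_iff₀' hR']
    exact_mod_cast hlt
  exact henc t b b' fun k hk => hb k (hk.trans_le (Nat.lt_succ_iff.mp hfloor))

section Decoder

variable {X Y : Type} [Fintype X] [Fintype Y] {P : X → Y → ℝ} {enc : ℕ → (ℕ → Bool) → X}

theorem ffBitErrProb_eq_sum_channelLaw (P : X → Y → ℝ) (enc : ℕ → (ℕ → Bool) → X) (n M i : ℕ)
    (dec : (ℕ → Bool) → (Fin n → Y) → Bool) :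
    ffBitErrProb P enc n M i dec =
      ∑ b : Fin M → Bool, ∑ y, channelLaw P (fun t : Fin n => enc t (extendB b)) y *
        (((2 : ℝ) ^ M)⁻¹ * if dec (extendB b) y = extendB b (i - 1) then 0 else 1) := by
  simp only [ffBitErrProb, channelLaw, mul_left_comm, mul_assoc]

theorem exists_decoder_ignoring_outputs (hP : IsStochastic P) {n m : ℕ} (M i : ℕ)
    {s : Finset (Fin n)}
    (henc : ∀ t ∈ s, ∀ b b' : ℕ → Bool, (∀ k, k < m → b k = b' k) → enc t b = enc t b')
    {dec : (ℕ → Bool) → (Fin n → Y) → Bool}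
    (hdec : ∀ b b' y, (∀ k, k < m → b k = b' k) → dec b y = dec b' y) :
    ∃ Df : (ℕ → Bool) → (Fin n → Y) → Bool,
      (∀ b b' y, (∀ k, k < m → b k = b' k) → Df b y = Df b' y) ∧
      (∀ b y y', (∀ t, t ∉ s → y t = y' t) → Df b y = Df b y') ∧
      ffBitErrProb P enc n M i Df ≤ ffBitErrProb P enc n M i dec := by
  obtain ⟨z, hz⟩ := hP.exists_sum_channelLaw_piecewise_le
    (x := fun (b : Fin M → Bool) (t : Fin n) => enc t (extendB b))
    (x' := fun (past : Fin m → Bool) (t : Fin n) => enc t (extendB past))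
    (key := fun b k => extendB b k)
    (fun b t ht => henc t ht _ _ fun k hk => (extendB_restrict _ hk).symm)
    fun b y => ((2 : ℝ) ^ M)⁻¹ * if dec (extendB b) y = extendB b (i - 1) then 0 else 1
  refine ⟨fun b y => dec b (s.piecewise (z fun k => b k) y), fun b b' y hb => ?_,
    fun b y y' hy => ?_, ?_⟩
  · have hpast : (fun k : Fin m => b k) = fun k : Fin m => b' k := funext fun k => hb k k.2
    simp only [hpast, hdec b b' _ hb]
  · have hpiecewise : s.piecewise (z fun k => b k) y = s.piecewise (z fun k => b k) y' :=
      s.piecewise_congr (fun _ _ => rfl) hy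
    simp only [hpiecewise]
  · simpa only [ffBitErrProb_eq_sum_channelLaw] using hz

/-- `i` is the 0-based index of the target bit. -/
theorem feedforward_window_dependence_general (hP : IsStochastic P) {R' : ℝ} (hR' : 0 < R')
    (henc : IsNoFeedbackEncoder R' enc) (i n M : ℕ) {dec : (ℕ → Bool) → (Fin n → Y) → Bool}
    (hdec : ∀ b b' y, (∀ k, k < i → b k = b' k) → dec b y = dec b' y) :
    ∃ Df : (ℕ → Bool) → (Fin n → Y) → Bool,
      (∀ b b' y, (∀ k, k < i → b k = b' k) → Df b y = Df b' y) ∧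
      (∀ b y y', (∀ t : Fin n, ⌈((i + 1 : ℕ) : ℝ) / R'⌉₊ - 1 ≤ (t : ℕ) → y t = y' t) →
        Df b y = Df b y') ∧
      ffBitErrProb P enc n M (i + 1) Df ≤ ffBitErrProb P enc n M (i + 1) dec := by
  obtain ⟨Df, hpast, hwindow, herr⟩ := exists_decoder_ignoring_outputs hP M (i + 1)
    (s := {t : Fin n | (t : ℕ) < ⌈((i + 1 : ℕ) : ℝ) / R'⌉₊ - 1})
    (fun t ht _ _ hb => henc.eq_of_lt_ceil hR' (Finset.mem_filter_univ t |>.mp ht) hb) hdec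
  exact ⟨Df, hpast, fun b y y' hy => hwindow b y y' fun t ht => hy t (by simpa using ht), herr⟩

end Decoder

/-- **Lemma 3 (window dependence of feedforward decoders).**  Let `P` be a DMC, `R > 0`
with bit rate `R' = R/ln 2 < 1`, and `enc` a rate-`R` encoder without feedback.  Fix a
bit index `i ≥ 1` and delay `d`, and let `dec` be any delay-`d` feedforward decoder for
bit `i` (it depends only on the past message bits `B_1^{i-1}` and all the channel
outputs `Y_1^{⌈i/R'⌉+d}`).  Then there is a feedforward decoder `Df` depending only on
`B_1^{i-1}` and the recent window `Y_{⌈i/R'⌉}^{⌈i/R'⌉+d}` of channel outputs whose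
probability of error on bit `i` is no larger, the message bits being i.i.d. fair coins. -/
theorem feedforward_window_dependence
    {X Y : Type} [Fintype X] [Fintype Y] [Nonempty X] [Nonempty Y]
    (P : X → Y → ℝ) (hP : IsStochastic P)
    (R : ℝ) (hR : 0 < R) (hR' : R / Real.log 2 < 1)
    (enc : ℕ → (ℕ → Bool) → X) (henc : IsNoFeedbackEncoder (R / Real.log 2) enc)
    (i d : ℕ) (hi : 1 ≤ i)
    (dec : (ℕ → Bool) → (Fin (Nat.ceil ((i : ℝ) / (R / Real.log 2)) + d) → Y) → Bool)
    (hdec : ∀ b b' y, (∀ k, k < i - 1 → b k = b' k) → dec b y = dec b' y) :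
    ∃ Df : (ℕ → Bool) → (Fin (Nat.ceil ((i : ℝ) / (R / Real.log 2)) + d) → Y) → Bool,
      (∀ b b' y, (∀ k, k < i - 1 → b k = b' k) → Df b y = Df b' y) ∧
      (∀ b y y',
        (∀ t : Fin (Nat.ceil ((i : ℝ) / (R / Real.log 2)) + d),
          Nat.ceil ((i : ℝ) / (R / Real.log 2)) - 1 ≤ (t : ℕ) → y t = y' t) →
        Df b y = Df b y') ∧
      ffBitErrProb P enc (Nat.ceil ((i : ℝ) / (R / Real.log 2)) + d)
          (max i (Nat.floor ((R / Real.log 2) *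
            ((Nat.ceil ((i : ℝ) / (R / Real.log 2)) + d : ℕ) : ℝ)))) i Df
        ≤ ffBitErrProb P enc (Nat.ceil ((i : ℝ) / (R / Real.log 2)) + d)
          (max i (Nat.floor ((R / Real.log 2) *
            ((Nat.ceil ((i : ℝ) / (R / Real.log 2)) + d : ℕ) : ℝ)))) i dec := by
  obtain ⟨j, rfl⟩ := Nat.exists_eq_add_of_le' hi
  exact feedforward_window_dependence_general hP (div_pos hR (Real.log_pos one_lt_two)) henc j _ _
    hdec

end
end

section
/- (Lemma 5, data-processing inequality for error signals.) Let B, X, Y, tilde B be random variables taking values in finite sets, with B uniformly distributed on {0,1}^m. Suppose: (i) tilde B is a deterministic function of (B, Y); (ii) B is a deterministic function of (tilde B, Y); and (iii) B - X - Y is a Markov chain. Then H(tilde B) >= m ln 2 - I(X; Y), where H denotes Shannon entropy and I mutual information, both in nats. -/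
/-!
Two facts about entropy give the bound. Since `B - X - Y` is a Markov chain,
`I(B;Y) ≤ I(X;Y)`; and since `B` can be recovered from `(B̃,Y)`, `H(B|Y) ≤ H(B̃|Y) ≤ H(B̃)`. Hence
`H(B) - I(X;Y) ≤ H(B) - I(B;Y) = H(B|Y) ≤ H(B̃)`, and `H(B) = m ln 2`.

Submodularity of entropy, which underlies both, is Gibbs' inequality for the law of `(U, V, W)`
against `P(u,v) P(v,w) / P(v)`; Markov chains are the case in which the two laws agree.
-/

open scoped BigOperators

noncomputable section

/-- The probability mass function of a random variable `V` on a finite sample space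
carrying the pmf `μ`. -/
def pmfOf {Ω A : Type} [Fintype Ω] [DecidableEq A] (μ : Ω → ℝ) (V : Ω → A) (a : A) : ℝ :=
  ∑ ω, if V ω = a then μ ω else 0

/-- Shannon entropy (in nats) of a random variable on a finite sample space. -/
def entropy {Ω A : Type} [Fintype Ω] [Fintype A] [DecidableEq A]
    (μ : Ω → ℝ) (V : Ω → A) : ℝ :=
  ∑ a, -(pmfOf μ V a * Real.log (pmfOf μ V a))

/-- Mutual information (in nats) between two random variables on a finite sample
space. -/
def mutualInfoRV {Ω A B : Type} [Fintype Ω] [Fintype A] [Fintype B]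
    [DecidableEq A] [DecidableEq B] (μ : Ω → ℝ) (U : Ω → A) (V : Ω → B) : ℝ :=
  entropy μ U + entropy μ V - entropy μ (fun ω => (U ω, V ω))

section WeightedSums

variable {Ω : Type*} [Fintype Ω] {μ F G : Ω → ℝ}

theorem sum_mul_le_sum_mul_of_pos (hμ : ∀ ω, 0 ≤ μ ω) (h : ∀ ω, 0 < μ ω → F ω ≤ G ω) :
    ∑ ω, μ ω * F ω ≤ ∑ ω, μ ω * G ω := by
  refine Finset.sum_le_sum fun ω _ => ?_
  rcases (hμ ω).eq_or_lt with h0 | hpos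
  · simp [← h0]
  · exact mul_le_mul_of_nonneg_left (h ω hpos) hpos.le

theorem sum_mul_congr_of_pos (hμ : ∀ ω, 0 ≤ μ ω) (h : ∀ ω, 0 < μ ω → F ω = G ω) :
    ∑ ω, μ ω * F ω = ∑ ω, μ ω * G ω :=
  le_antisymm (sum_mul_le_sum_mul_of_pos hμ fun ω hω => (h ω hω).le)
    (sum_mul_le_sum_mul_of_pos hμ fun ω hω => (h ω hω).ge)

end WeightedSums

section MassFunction

variable {Ω α β : Type} [Fintype Ω] [DecidableEq α] [DecidableEq β] {μ : Ω → ℝ}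

theorem pmfOf_nonneg (hμ : ∀ ω, 0 ≤ μ ω) (U : Ω → α) (a : α) : 0 ≤ pmfOf μ U a :=
  Finset.sum_nonneg fun ω _ => ite_nonneg (hμ ω) le_rfl

theorem le_pmfOf_apply (hμ : ∀ ω, 0 ≤ μ ω) (U : Ω → α) (ω : Ω) : μ ω ≤ pmfOf μ U (U ω) := by
  simpa [pmfOf] using Finset.single_le_sum (f := fun ω' => if U ω' = U ω then μ ω' else 0)
    (fun ω' _ => ite_nonneg (hμ ω') le_rfl) (Finset.mem_univ ω)

theorem pmfOf_apply_pos (hμ : ∀ ω, 0 ≤ μ ω) (U : Ω → α) {ω : Ω} (hω : 0 < μ ω) :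
    0 < pmfOf μ U (U ω) :=
  hω.trans_le (le_pmfOf_apply hμ U ω)

theorem pmfOf_le_pmfOf_comp (hμ : ∀ ω, 0 ≤ μ ω) (U : Ω → α) (f : α → β) (a : α) :
    pmfOf μ U a ≤ pmfOf μ (fun ω => f (U ω)) (f a) := by
  refine Finset.sum_le_sum fun ω _ => ?_
  by_cases h : U ω = a
  · simp [h]
  · simpa [h] using ite_nonneg (hμ ω) le_rfl

theorem pmfOf_comp_of_injective (μ : Ω → ℝ) (U : Ω → α) {f : α → β} (hf : f.Injective) (a : α) :
    pmfOf μ (fun ω => f (U ω)) (f a) = pmfOf μ U a := by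
  simp only [pmfOf, hf.eq_iff]

theorem sum_mul_comp_eq_sum_pmfOf_mul [Fintype α] (μ : Ω → ℝ) (U : Ω → α) (F : α → ℝ) :
    ∑ ω, μ ω * F (U ω) = ∑ a, pmfOf μ U a * F a := by
  simp only [pmfOf, Finset.sum_mul]
  rw [Finset.sum_comm]
  simp [ite_mul]

theorem sum_pmfOf [Fintype α] (μ : Ω → ℝ) (U : Ω → α) : ∑ a, pmfOf μ U a = ∑ ω, μ ω := by
  simpa using (sum_mul_comp_eq_sum_pmfOf_mul μ U fun _ => 1).symm

theorem sum_pmfOf_prodMk_right [Fintype β] (μ : Ω → ℝ) (U : Ω → α) (V : Ω → β) (a : α) :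
    ∑ b, pmfOf μ (fun ω => (U ω, V ω)) (a, b) = pmfOf μ U a := by
  simp only [pmfOf, Prod.mk.injEq, ite_and]
  rw [Finset.sum_comm]
  simp

theorem sum_pmfOf_prodMk_left [Fintype α] (μ : Ω → ℝ) (U : Ω → α) (V : Ω → β) (b : β) :
    ∑ a, pmfOf μ (fun ω => (U ω, V ω)) (a, b) = pmfOf μ V b := by
  simp only [pmfOf, Prod.mk.injEq, ite_and]
  rw [Finset.sum_comm]
  simp

end MassFunction

section Entropy

variable {Ω α β : Type} [Fintype Ω] [Fintype α] [DecidableEq α] [Fintype β] [DecidableEq β]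
  {μ : Ω → ℝ}

theorem entropy_eq_neg_sum_mul_log (μ : Ω → ℝ) (U : Ω → α) :
    entropy μ U = -∑ ω, μ ω * Real.log (pmfOf μ U (U ω)) := by
  rw [sum_mul_comp_eq_sum_pmfOf_mul μ U fun a => Real.log (pmfOf μ U a)]
  simp [entropy]

theorem entropy_of_uniform {U : Ω → α} (hU : ∀ a, pmfOf μ U a = (Fintype.card α : ℝ)⁻¹) :
    entropy μ U = Real.log (Fintype.card α) := by
  rcases isEmpty_or_nonempty α with _ | _ <;> simp [entropy, hU]

theorem entropy_const (hμ1 : ∑ ω, μ ω = 1) (a : α) : entropy μ (fun _ => a) = 0 := by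
  simp [entropy_eq_neg_sum_mul_log, pmfOf, hμ1]

theorem entropy_comp_of_injective (μ : Ω → ℝ) (U : Ω → α) {f : α → β} (hf : f.Injective) :
    entropy μ (fun ω => f (U ω)) = entropy μ U := by
  simp only [entropy_eq_neg_sum_mul_log, pmfOf_comp_of_injective μ U hf]

theorem entropy_prodMk_comm (μ : Ω → ℝ) (U : Ω → α) (V : Ω → β) :
    entropy μ (fun ω => (U ω, V ω)) = entropy μ (fun ω => (V ω, U ω)) :=
  entropy_comp_of_injective μ (fun ω => (V ω, U ω)) Prod.swap_injective

theorem entropy_comp_le (hμ : ∀ ω, 0 ≤ μ ω) (U : Ω → α) (f : α → β) :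
    entropy μ (fun ω => f (U ω)) ≤ entropy μ U := by
  simp only [entropy_eq_neg_sum_mul_log]
  exact neg_le_neg <| sum_mul_le_sum_mul_of_pos hμ fun ω hω =>
    Real.log_le_log (pmfOf_apply_pos hμ U hω) (pmfOf_le_pmfOf_comp hμ U f (U ω))

theorem entropy_le_neg_sum_mul_log (hμ : ∀ ω, 0 ≤ μ ω) (U : Ω → α) {q : α → ℝ}
    (hq : ∀ a, 0 ≤ q a) (hq_sum : ∑ a, q a ≤ ∑ ω, μ ω) (hq_pos : ∀ ω, 0 < μ ω → 0 < q (U ω)) :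
    entropy μ U ≤ -∑ ω, μ ω * Real.log (q (U ω)) := by
  set p := pmfOf μ U
  have log_le (ω : Ω) (hω : 0 < μ ω) :
      Real.log (q (U ω)) ≤ Real.log (p (U ω)) + (q (U ω) / p (U ω) - 1) := by
    have hp : 0 < p (U ω) := pmfOf_apply_pos hμ U hω
    have := Real.log_le_sub_one_of_pos (div_pos (hq_pos ω hω) hp)
    rw [Real.log_div (hq_pos ω hω).ne' hp.ne'] at this
    linarith
  have sum_ratio_le : ∑ ω, μ ω * (q (U ω) / p (U ω)) ≤ ∑ ω, μ ω := by
    rw [sum_mul_comp_eq_sum_pmfOf_mul μ U fun a => q a / p a]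
    refine (Finset.sum_le_sum fun a _ => ?_).trans hq_sum
    rw [mul_div_left_comm]
    exact mul_le_of_le_one_right (hq a) (div_self_le_one (p a))
  have sum_log_le := sum_mul_le_sum_mul_of_pos hμ log_le
  simp only [mul_add, mul_sub, mul_one, Finset.sum_add_distrib, Finset.sum_sub_distrib]
    at sum_log_le
  rw [entropy_eq_neg_sum_mul_log]
  linarith

end Entropy

section MarkovChain

variable {Ω α β γ : Type} [Fintype Ω] [DecidableEq α] [DecidableEq β] [DecidableEq γ]
  {μ : Ω → ℝ}

/-- `U - V - W` is a Markov chain: `P(u,v,w) P(v) = P(u,v) P(v,w)`, the division-free form of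
conditional independence of `U` and `W` given `V`. -/
def IsMarkovChain (μ : Ω → ℝ) (U : Ω → α) (V : Ω → β) (W : Ω → γ) : Prop :=
  ∀ u v w, pmfOf μ (fun ω => (U ω, V ω, W ω)) (u, v, w) * pmfOf μ V v =
    pmfOf μ (fun ω => (U ω, V ω)) (u, v) * pmfOf μ (fun ω => (V ω, W ω)) (v, w)

/-- The law `P(u,v) P(v,w) / P(v)` of the Markov chain whose consecutive pairs are distributed as
`(U, V)` and `(V, W)`. Where `P(v) = 0` the quotient is `0`, as it should be. -/
def markovPMF (μ : Ω → ℝ) (U : Ω → α) (V : Ω → β) (W : Ω → γ) (t : α × β × γ) : ℝ :=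
  pmfOf μ (fun ω => (U ω, V ω)) (t.1, t.2.1) * pmfOf μ (fun ω => (V ω, W ω)) t.2 /
    pmfOf μ V t.2.1

theorem markovPMF_nonneg (hμ : ∀ ω, 0 ≤ μ ω) (U : Ω → α) (V : Ω → β) (W : Ω → γ)
    (t : α × β × γ) : 0 ≤ markovPMF μ U V W t :=
  div_nonneg (mul_nonneg (pmfOf_nonneg hμ _ _) (pmfOf_nonneg hμ _ _)) (pmfOf_nonneg hμ _ _)

theorem markovPMF_apply_pos (hμ : ∀ ω, 0 ≤ μ ω) (U : Ω → α) (V : Ω → β) (W : Ω → γ) {ω : Ω}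
    (hω : 0 < μ ω) : 0 < markovPMF μ U V W (U ω, V ω, W ω) :=
  div_pos (mul_pos (pmfOf_apply_pos hμ (fun ω => (U ω, V ω)) hω)
    (pmfOf_apply_pos hμ (fun ω => (V ω, W ω)) hω)) (pmfOf_apply_pos hμ V hω)

theorem sum_markovPMF [Fintype α] [Fintype β] [Fintype γ] (μ : Ω → ℝ) (U : Ω → α) (V : Ω → β)
    (W : Ω → γ) : ∑ t, markovPMF μ U V W t = ∑ ω, μ ω := by
  set p := pmfOf μ V
  set q := pmfOf μ fun ω => (U ω, V ω)
  set r := pmfOf μ fun ω => (V ω, W ω)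
  calc ∑ t, markovPMF μ U V W t = ∑ u, ∑ v, ∑ w, q (u, v) * r (v, w) / p v := by
        simp only [Fintype.sum_prod_type, markovPMF, p, q, r]
    _ = ∑ v, (∑ u, q (u, v)) * (∑ w, r (v, w)) / p v := by
        rw [Finset.sum_comm]
        simp only [Finset.sum_mul_sum, Finset.sum_div]
    _ = ∑ v, p v * p v / p v := by
        simp only [p, q, r, sum_pmfOf_prodMk_left, sum_pmfOf_prodMk_right]
    _ = ∑ ω, μ ω := by
        simp only [mul_self_div_self, p, sum_pmfOf]

variable [Fintype α] [Fintype β] [Fintype γ]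

theorem neg_sum_mul_log_markovPMF (hμ : ∀ ω, 0 ≤ μ ω) (U : Ω → α) (V : Ω → β) (W : Ω → γ) :
    -∑ ω, μ ω * Real.log (markovPMF μ U V W (U ω, V ω, W ω)) =
      entropy μ (fun ω => (U ω, V ω)) + entropy μ (fun ω => (V ω, W ω)) - entropy μ V := by
  have log_eq (ω : Ω) (hω : 0 < μ ω) :
      Real.log (markovPMF μ U V W (U ω, V ω, W ω)) =
        Real.log (pmfOf μ (fun ω => (U ω, V ω)) (U ω, V ω)) +
          Real.log (pmfOf μ (fun ω => (V ω, W ω)) (V ω, W ω)) - Real.log (pmfOf μ V (V ω)) := by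
    have hUV := (pmfOf_apply_pos hμ (fun ω => (U ω, V ω)) hω).ne'
    have hVW := (pmfOf_apply_pos hμ (fun ω => (V ω, W ω)) hω).ne'
    rw [markovPMF, Real.log_div (mul_ne_zero hUV hVW) (pmfOf_apply_pos hμ V hω).ne',
      Real.log_mul hUV hVW]
  rw [sum_mul_congr_of_pos hμ log_eq]
  simp only [entropy_eq_neg_sum_mul_log, mul_add, mul_sub, Finset.sum_add_distrib,
    Finset.sum_sub_distrib]
  ring

theorem entropy_submodular (hμ : ∀ ω, 0 ≤ μ ω) (U : Ω → α) (V : Ω → β) (W : Ω → γ) :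
    entropy μ (fun ω => (U ω, V ω, W ω)) + entropy μ V ≤
      entropy μ (fun ω => (U ω, V ω)) + entropy μ (fun ω => (V ω, W ω)) := by
  have gibbs := entropy_le_neg_sum_mul_log hμ (fun ω => (U ω, V ω, W ω))
    (markovPMF_nonneg hμ U V W) (sum_markovPMF μ U V W).le
    fun _ hω => markovPMF_apply_pos hμ U V W hω
  rw [neg_sum_mul_log_markovPMF hμ] at gibbs
  linarith

theorem IsMarkovChain.entropy_add_eq (hμ : ∀ ω, 0 ≤ μ ω) {U : Ω → α} {V : Ω → β} {W : Ω → γ}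
    (h : IsMarkovChain μ U V W) :
    entropy μ (fun ω => (U ω, V ω, W ω)) + entropy μ V =
      entropy μ (fun ω => (U ω, V ω)) + entropy μ (fun ω => (V ω, W ω)) := by
  have log_eq (ω : Ω) (hω : 0 < μ ω) :
      Real.log (pmfOf μ (fun ω => (U ω, V ω, W ω)) (U ω, V ω, W ω)) =
        Real.log (markovPMF μ U V W (U ω, V ω, W ω)) :=
    congrArg Real.log ((eq_div_iff (pmfOf_apply_pos hμ V hω).ne').2 (h _ _ _))
  rw [entropy_eq_neg_sum_mul_log μ fun ω => (U ω, V ω, W ω), sum_mul_congr_of_pos hμ log_eq,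
    neg_sum_mul_log_markovPMF hμ, sub_add_cancel]

theorem IsMarkovChain.mutualInfoRV_le (hμ : ∀ ω, 0 ≤ μ ω) {U : Ω → α} {V : Ω → β} {W : Ω → γ}
    (h : IsMarkovChain μ U V W) : mutualInfoRV μ U W ≤ mutualInfoRV μ V W := by
  have chain := h.entropy_add_eq hμ
  have submod := entropy_submodular hμ V U W
  have reorder : entropy μ (fun ω => (V ω, U ω, W ω)) = entropy μ (fun ω => (U ω, V ω, W ω)) :=
    entropy_comp_of_injective μ (fun ω => (U ω, V ω, W ω)) (f := fun t => (t.2.1, t.1, t.2.2))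
      fun _ _ => by simp +contextual [Prod.ext_iff]
  rw [reorder, entropy_prodMk_comm μ V U] at submod
  simp only [mutualInfoRV]
  linarith

end MarkovChain

section ConditionalEntropy

variable {Ω α β γ : Type} [Fintype Ω] [Fintype α] [DecidableEq α] [Fintype β] [DecidableEq β]
  [Fintype γ] [DecidableEq γ] {μ : Ω → ℝ}

/-- The conditional entropy `H(U|V)` in nats, defined through the chain rule
`H(U,V) = H(V) + H(U|V)`. -/
def condEntropy (μ : Ω → ℝ) (U : Ω → α) (V : Ω → β) : ℝ :=
  entropy μ (fun ω => (U ω, V ω)) - entropy μ V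

theorem entropy_sub_mutualInfoRV (μ : Ω → ℝ) (U : Ω → α) (V : Ω → β) :
    entropy μ U - mutualInfoRV μ U V = condEntropy μ U V := by
  rw [mutualInfoRV, condEntropy]
  ring

theorem condEntropy_le_entropy (hμ : ∀ ω, 0 ≤ μ ω) (hμ1 : ∑ ω, μ ω = 1) (U : Ω → α)
    (V : Ω → β) : condEntropy μ U V ≤ entropy μ U := by
  have submod := entropy_submodular hμ U (fun _ => ()) V
  rw [entropy_const hμ1, add_zero,
    entropy_comp_of_injective μ (fun ω => (U ω, V ω)) (f := fun t => (t.1, (), t.2))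
      fun _ _ => by simp [Prod.ext_iff],
    entropy_comp_of_injective μ U (Prod.mk_left_injective ()),
    entropy_comp_of_injective μ V (Prod.mk_right_injective ())] at submod
  exact sub_le_iff_le_add.2 submod

theorem condEntropy_comp_le (hμ : ∀ ω, 0 ≤ μ ω) (U : Ω → α) (V : Ω → β) (f : α × β → γ) :
    condEntropy μ (fun ω => f (U ω, V ω)) V ≤ condEntropy μ U V :=
  sub_le_sub_right (entropy_comp_le hμ (fun ω => (U ω, V ω)) fun t => (f t, t.2)) _

end ConditionalEntropy

theorem error_signal_data_processing_general
    {Ω α β γ τ : Type} [Fintype Ω] [Fintype α] [Fintype β] [Fintype γ] [Fintype τ]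
    [DecidableEq α] [DecidableEq β] [DecidableEq γ] [DecidableEq τ]
    {μ : Ω → ℝ} (hμ : ∀ ω, 0 ≤ μ ω) (hμ1 : ∑ ω, μ ω = 1)
    {B : Ω → α} {X : Ω → β} {Y : Ω → γ} {T : Ω → τ}
    (hB : ∃ g : τ × γ → α, ∀ ω, B ω = g (T ω, Y ω)) (hBXY : IsMarkovChain μ B X Y) :
    entropy μ B - mutualInfoRV μ X Y ≤ entropy μ T := by
  obtain ⟨g, hg⟩ := hB
  obtain rfl : B = fun ω => g (T ω, Y ω) := funext hg
  calc entropy μ (fun ω => g (T ω, Y ω)) - mutualInfoRV μ X Y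
      ≤ entropy μ (fun ω => g (T ω, Y ω)) - mutualInfoRV μ (fun ω => g (T ω, Y ω)) Y :=
        sub_le_sub_left (hBXY.mutualInfoRV_le hμ) _
    _ = condEntropy μ (fun ω => g (T ω, Y ω)) Y := entropy_sub_mutualInfoRV μ _ Y
    _ ≤ condEntropy μ T Y := condEntropy_comp_le hμ T Y g
    _ ≤ entropy μ T := condEntropy_le_entropy hμ hμ1 T Y

/-- **Lemma 5 (data-processing inequality for error signals).**  Let `B, X, Y, B̃` be
random variables on a finite probability space, with `B` uniform on `{0,1}^m`.  If
(i) `B̃` is a deterministic function of `(B,Y)`, (ii) `B` is a deterministic function of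
`(B̃,Y)`, and (iii) `B - X - Y` is a Markov chain, then
`H(B̃) ≥ m ln 2 - I(X;Y)` (entropies and informations in nats). -/
theorem error_signal_data_processing
    {Ω XT YT TT : Type} [Fintype Ω] [Fintype XT] [Fintype YT] [Fintype TT]
    [DecidableEq XT] [DecidableEq YT] [DecidableEq TT]
    (μ : Ω → ℝ) (hμ0 : ∀ ω, 0 ≤ μ ω) (hμ1 : ∑ ω, μ ω = 1)
    (m : ℕ) (B : Ω → (Fin m → Bool)) (Xv : Ω → XT) (Yv : Ω → YT) (Bt : Ω → TT)
    (hBunif : ∀ v : Fin m → Bool, pmfOf μ B v = ((2 : ℝ) ^ m)⁻¹)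
    (hfun1 : ∃ f : (Fin m → Bool) × YT → TT, ∀ ω, Bt ω = f (B ω, Yv ω))
    (hfun2 : ∃ g : TT × YT → (Fin m → Bool), ∀ ω, B ω = g (Bt ω, Yv ω))
    (hmarkov : ∀ (v : Fin m → Bool) (x : XT) (y : YT),
      pmfOf μ (fun ω => (B ω, Xv ω, Yv ω)) (v, x, y) * pmfOf μ Xv x
        = pmfOf μ (fun ω => (B ω, Xv ω)) (v, x) * pmfOf μ (fun ω => (Xv ω, Yv ω)) (x, y)) :
    (m : ℝ) * Real.log 2 - mutualInfoRV μ Xv Yv ≤ entropy μ Bt := by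
  have entropy_B : entropy μ B = m * Real.log 2 := by
    rw [entropy_of_uniform (by simpa using hBunif)]
    simp
  exact entropy_B ▸ error_signal_data_processing_general hμ0 hμ1 hfun2 hmarkov

end
end

section
/- (Lemma 6, change of measure.) Let X, Y be finite alphabets and let G = (g_{y|x}) and P = (p_{y|x}) be stochastic matrices with the property that g_{y|x} > 0 implies p_{y|x} > 0. For a string x in X^d, let P_G(.|x) and P_P(.|x) denote the product conditional laws on Y^d (P_G(y|x) = prod_t g_{y_t|x_t}, and similarly for P), and let r(x) be the empirical distribution (type) of x. Then for every delta > 0 and epsilon > 0 there exists d_0 = d_0(epsilon, delta, G, P) such that for all d > d_0, all x in X^d, and all events A subset of Y^d: if P_G(A | x) >= delta, then P_P(A | x) >= (delta/2) exp(-d (D(G||P | r(x)) + epsilon)), where D(G||P|r) = sum_x r_x sum_y g_{y|x} ln(g_{y|x}/p_{y|x}). -/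
open scoped BigOperators

noncomputable section

/-- The empirical distribution (type) of a string `x ∈ X^d`. -/
def empDist {X : Type} [Fintype X] [DecidableEq X] {d : ℕ} (x : Fin d → X) : X → ℝ :=
  fun a => ((Finset.univ.filter fun t => x t = a).card : ℝ) / d

/-- The conditional divergence `D(G‖P|r) = ∑_x r_x ∑_y g_{y|x} ln(g_{y|x}/p_{y|x})`. -/
def condDiv {X Y : Type} [Fintype X] [Fintype Y] (G P : X → Y → ℝ) (r : X → ℝ) : ℝ :=
  ∑ x, r x * ∑ y, G x y * Real.log (G x y / P x y)

/-!
Under `P_G(·|x)` the log-likelihood ratio `∑ t, ln (g_{y_t|x_t} / p_{y_t|x_t})` of the output has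
mean `d D(G‖P|r(x))` and, the outputs being independent, a variance at most linear in `d`. By
Chebyshev's inequality it exceeds its mean by more than `d ε` with probability `O(1 / d)`, which is
at most `δ / 2` for large `d`. The part of `A` where it does not keeps mass `δ / 2`, and there
`P_G(y|x) ≤ exp (d (D(G‖P|r(x)) + ε)) P_P(y|x)`.
-/

open MeasureTheory ProbabilityTheory

section WeightedMoments

variable {α : Type*} [Fintype α]

/-- The expectation of `f` under the law with probability mass function `w`. -/
def weightedMean (w f : α → ℝ) : ℝ :=
  ∑ a, w a * f a

/-- The variance of `f` under the law with probability mass function `w`. -/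
def weightedVariance (w f : α → ℝ) : ℝ :=
  weightedMean w fun a => (f a - weightedMean w f) ^ 2

lemma weightedVariance_nonneg {w : α → ℝ} (hw : ∀ a, 0 ≤ w a) (f : α → ℝ) :
    0 ≤ weightedVariance w f :=
  Finset.sum_nonneg fun a _ => mul_nonneg (hw a) (sq_nonneg _)

/-- A point of the standard simplex as a Mathlib `PMF`, giving access to measure-theoretic
probability for laws presented by real weights. -/
def simplexPMF {w : α → ℝ} (hw : w ∈ stdSimplex ℝ α) : PMF α :=
  PMF.ofFintype (fun a => ENNReal.ofReal (w a)) <| by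
    rw [← ENNReal.ofReal_sum_of_nonneg fun a _ => hw.1 a, hw.2, ENNReal.ofReal_one]

lemma toReal_simplexPMF_apply {w : α → ℝ} (hw : w ∈ stdSimplex ℝ α) (a : α) :
    (simplexPMF hw a).toReal = w a :=
  ENNReal.toReal_ofReal (hw.1 a)

variable [MeasurableSpace α] [MeasurableSingletonClass α]

lemma integral_simplexPMF {w : α → ℝ} (hw : w ∈ stdSimplex ℝ α) (f : α → ℝ) :
    ∫ a, f a ∂(simplexPMF hw).toMeasure = weightedMean w f := by
  simp only [PMF.integral_eq_sum, toReal_simplexPMF_apply, smul_eq_mul, weightedMean]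

lemma variance_simplexPMF {w : α → ℝ} (hw : w ∈ stdSimplex ℝ α) (f : α → ℝ) :
    Var[f; (simplexPMF hw).toMeasure] = weightedVariance w f := by
  rw [variance_eq_integral AEStronglyMeasurable.of_discrete.aemeasurable, integral_simplexPMF,
    integral_simplexPMF, weightedVariance]

end WeightedMoments

section ProductLaw

variable {ι : Type*} [Fintype ι]

lemma measureReal_pi_deviation_le {Ω : ι → Type*} [∀ i, MeasurableSpace (Ω i)]
    {μ : ∀ i, Measure (Ω i)} [∀ i, IsProbabilityMeasure (μ i)] {X : ∀ i, Ω i → ℝ}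
    (hX : ∀ i, MemLp (X i) 2 (μ i)) {c : ℝ} (hc : 0 < c) :
    (Measure.pi μ).real {ω | c ≤ |∑ i, X i (ω i) - ∑ i, ∫ a, X i a ∂μ i|}
      ≤ (∑ i, Var[X i; μ i]) / c ^ 2 := by
  have hcomp (i : ι) : MemLp (fun ω : ∀ j, Ω j => X i (ω i)) 2 (Measure.pi μ) :=
    (hX i).comp_measurePreserving (measurePreserving_eval μ i)
  have hmean : ∫ ω, ∑ i, X i (ω i) ∂Measure.pi μ = ∑ i, ∫ a, X i a ∂μ i := by
    rw [integral_finsetSum _ fun i _ => (hcomp i).integrable one_le_two]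
    exact Finset.sum_congr rfl fun i _ => integral_comp_eval (hX i).aestronglyMeasurable
  have hchebyshev := meas_ge_le_variance_div_sq (memLp_finsetSum' Finset.univ fun i _ => hcomp i) hc
  simp only [Finset.sum_apply] at hchebyshev
  rw [variance_sum_pi hX, hmean] at hchebyshev
  exact ENNReal.toReal_le_of_le_ofReal
    (div_nonneg (Finset.sum_nonneg fun i _ => variance_nonneg _ _) (sq_nonneg c)) hchebyshev

variable {α : ι → Type*} [∀ i, Fintype (α i)]

lemma measureReal_pi_simplexPMF [∀ i, MeasurableSpace (α i)] [∀ i, MeasurableSingletonClass (α i)]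
    {w : ∀ i, α i → ℝ} (hw : ∀ i, w i ∈ stdSimplex ℝ (α i)) (B : Finset (∀ i, α i)) :
    (Measure.pi fun i => (simplexPMF (hw i)).toMeasure).real B = ∑ a ∈ B, ∏ i, w i (a i) := by
  rw [← sum_measureReal_singleton]
  refine Finset.sum_congr rfl fun a _ => ?_
  simp only [measureReal_def, Measure.pi_singleton, ENNReal.toReal_prod,
    PMF.toMeasure_apply_singleton _ _ (measurableSet_singleton _), toReal_simplexPMF_apply]

lemma sum_prod_le_sum_weightedVariance_div_sq {w : ∀ i, α i → ℝ}
    (hw : ∀ i, w i ∈ stdSimplex ℝ (α i)) (f : ∀ i, α i → ℝ) {c : ℝ} (hc : 0 < c)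
    {B : Finset (∀ i, α i)}
    (hB : ∀ a ∈ B, c ≤ |∑ i, f i (a i) - ∑ i, weightedMean (w i) (f i)|) :
    ∑ a ∈ B, ∏ i, w i (a i) ≤ (∑ i, weightedVariance (w i) (f i)) / c ^ 2 := by
  let _ (i : ι) : MeasurableSpace (α i) := ⊤
  have hdev := measureReal_pi_deviation_le (μ := fun i => (simplexPMF (hw i)).toMeasure)
    (X := f) (fun _ => MemLp.of_discrete) hc
  simp only [integral_simplexPMF, variance_simplexPMF] at hdev
  rw [← measureReal_pi_simplexPMF hw]
  exact (measureReal_mono hB).trans hdev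

end ProductLaw

lemma sum_le_exp_mul_sum_add_sum_filter {Ω : Type*} {g p L : Ω → ℝ} (hp : ∀ ω, 0 ≤ p ω)
    (hgp : ∀ ω, g ω ≤ Real.exp (L ω) * p ω) (A : Finset Ω) (c : ℝ) :
    ∑ ω ∈ A, g ω ≤ Real.exp c * ∑ ω ∈ A, p ω + ∑ ω ∈ A with c < L ω, g ω := by
  have htypical : ∑ ω ∈ A with ¬ c < L ω, g ω ≤ Real.exp c * ∑ ω ∈ A, p ω :=
    calc ∑ ω ∈ A with ¬ c < L ω, g ω
        ≤ ∑ ω ∈ A with ¬ c < L ω, Real.exp c * p ω := by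
          refine Finset.sum_le_sum fun ω hω => (hgp ω).trans ?_
          have hL : L ω ≤ c := not_lt.mp (Finset.mem_filter.mp hω).2
          gcongr
          exact hp ω
      _ ≤ ∑ ω ∈ A, Real.exp c * p ω :=
          Finset.sum_le_sum_of_subset_of_nonneg (Finset.filter_subset _ _)
            fun ω _ _ => mul_nonneg (Real.exp_pos c).le (hp ω)
      _ = Real.exp c * ∑ ω ∈ A, p ω := (Finset.mul_sum _ _ _).symm
  rw [← Finset.sum_filter_add_sum_filter_not A (fun ω => c < L ω)]
  linarith

/-- The log-likelihood ratio of `g` against `p`; by the conventions `x / 0 = 0` and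
`Real.log 0 = 0` it is `0` where `g` or `p` vanishes. -/
def logRatio {α : Type*} (g p : α → ℝ) (a : α) : ℝ :=
  Real.log (g a / p a)

lemma le_exp_logRatio_mul {α : Type*} {g p : α → ℝ} {a : α} (hp : 0 ≤ p a)
    (hgp : 0 < g a → 0 < p a) : g a ≤ Real.exp (logRatio g p a) * p a := by
  obtain hg | hg := le_or_gt (g a) 0
  · exact hg.trans (by positivity)
  · rw [logRatio, Real.exp_log (div_pos hg (hgp hg)), div_mul_cancel₀ _ (hgp hg).ne']

lemma sum_prod_le_exp_mul_sum_prod_add {ι : Type*} [Fintype ι] {α : ι → Type*}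
    [∀ i, Fintype (α i)] {g p : ∀ i, α i → ℝ} (hg : ∀ i, g i ∈ stdSimplex ℝ (α i))
    (hp : ∀ i a, 0 ≤ p i a) (hgp : ∀ i a, 0 < g i a → 0 < p i a) (A : Finset (∀ i, α i))
    {c : ℝ} (hc : 0 < c) :
    ∑ a ∈ A, ∏ i, g i (a i)
      ≤ Real.exp (∑ i, weightedMean (g i) (logRatio (g i) (p i)) + c) * ∑ a ∈ A, ∏ i, p i (a i)
        + (∑ i, weightedVariance (g i) (logRatio (g i) (p i))) / c ^ 2 := by
  have hratio (a : ∀ i, α i) :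
      ∏ i, g i (a i) ≤ Real.exp (∑ i, logRatio (g i) (p i) (a i)) * ∏ i, p i (a i) := by
    rw [Real.exp_sum, ← Finset.prod_mul_distrib]
    exact Finset.prod_le_prod (fun i _ => (hg i).1 _)
      fun i _ => le_exp_logRatio_mul (hp i _) (hgp i _)
  refine (sum_le_exp_mul_sum_add_sum_filter (fun a => Finset.prod_nonneg fun i _ => hp i (a i))
    hratio A (∑ i, weightedMean (g i) (logRatio (g i) (p i)) + c)).trans ?_
  gcongr
  refine sum_prod_le_sum_weightedVariance_div_sq hg (fun i => logRatio (g i) (p i)) hc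
    fun a ha => le_trans ?_ (le_abs_self _)
  linarith [(Finset.mem_filter.mp ha).2]

lemma card_mul_sum_empDist_mul {X : Type} [Fintype X] [DecidableEq X] {d : ℕ} (x : Fin d → X)
    (f : X → ℝ) : (d : ℝ) * ∑ a, empDist x a * f a = ∑ t, f (x t) := by
  obtain rfl | hd := eq_or_ne d 0
  · simp
  · rw [← Finset.sum_fiberwise' Finset.univ x f, Finset.mul_sum]
    refine Finset.sum_congr rfl fun a _ => ?_
    rw [Finset.sum_const, nsmul_eq_mul, empDist]
    field_simp

lemma sum_prod_le_exp_condDiv_mul_sum_prod_add {X Y : Type} [Fintype X] [Fintype Y]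
    [DecidableEq X] {G P : X → Y → ℝ} (hG : IsStochastic G) (hP : ∀ x y, 0 ≤ P x y)
    (habs : ∀ x y, 0 < G x y → 0 < P x y) {ε : ℝ} (hε : 0 < ε) {d : ℕ} (hd : 0 < d)
    (x : Fin d → X) (A : Finset (Fin d → Y)) :
    ∑ y ∈ A, ∏ t, G (x t) (y t)
      ≤ Real.exp (d * (condDiv G P (empDist x) + ε)) * ∑ y ∈ A, ∏ t, P (x t) (y t)
        + (∑ a, weightedVariance (G a) (logRatio (G a) (P a))) / (d * ε ^ 2) := by
  set V : X → ℝ := fun a => weightedVariance (G a) (logRatio (G a) (P a))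
  have hmean : ∑ t, weightedMean (G (x t)) (logRatio (G (x t)) (P (x t)))
      = d * condDiv G P (empDist x) :=
    (card_mul_sum_empDist_mul x fun a => weightedMean (G a) (logRatio (G a) (P a))).symm
  have hvar : ∑ t, V (x t) ≤ d * ∑ a, V a := by
    refine (Finset.sum_le_card_nsmul _ _ (∑ a, V a) fun t _ => ?_).trans_eq (by simp)
    exact Finset.single_le_sum (f := V) (fun a _ => weightedVariance_nonneg (hG a).1 _)
      (Finset.mem_univ (x t))
  have hd' : (0 : ℝ) < d := Nat.cast_pos.mpr hd
  calc ∑ y ∈ A, ∏ t, G (x t) (y t)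
      ≤ Real.exp (d * condDiv G P (empDist x) + d * ε) * ∑ y ∈ A, ∏ t, P (x t) (y t)
          + (∑ t, V (x t)) / (d * ε) ^ 2 := by
        rw [← hmean]
        exact sum_prod_le_exp_mul_sum_prod_add (fun t => hG (x t)) (fun t => hP (x t))
          (fun t => habs (x t)) A (mul_pos hd' hε)
    _ ≤ Real.exp (d * condDiv G P (empDist x) + d * ε) * ∑ y ∈ A, ∏ t, P (x t) (y t)
          + (d * ∑ a, V a) / (d * ε) ^ 2 := by gcongr
    _ = _ := by
        rw [← mul_add]
        congr 1
        field_simp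

theorem change_of_measure_general {X Y : Type} [Fintype X] [Fintype Y] [DecidableEq X]
    (G P : X → Y → ℝ) (hG : IsStochastic G) (hP : ∀ x y, 0 ≤ P x y)
    (habs : ∀ x y, 0 < G x y → 0 < P x y) (δ ε : ℝ) (hδ : 0 < δ) (hε : 0 < ε) :
    ∃ d0 : ℕ, ∀ d : ℕ, d0 < d → ∀ x : Fin d → X, ∀ A : Finset (Fin d → Y),
      δ ≤ (∑ y ∈ A, ∏ t, G (x t) (y t)) →
      (δ / 2) * Real.exp (-(d : ℝ) * (condDiv G P (empDist x) + ε)) ≤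
        ∑ y ∈ A, ∏ t, P (x t) (y t) := by
  set V : ℝ := ∑ a, weightedVariance (G a) (logRatio (G a) (P a))
  obtain ⟨d0, hd0⟩ := exists_nat_gt (V / (δ / 2 * ε ^ 2))
  refine ⟨d0, fun d hd x A hA => ?_⟩
  have hd_pos : 0 < d := Nat.zero_lt_of_lt hd
  have htail : V / (d * ε ^ 2) ≤ δ / 2 := by
    have hlarge : V < d * (δ / 2 * ε ^ 2) :=
      (div_lt_iff₀ (by positivity)).mp (hd0.trans (Nat.cast_lt.mpr hd))
    rw [div_le_iff₀ (by positivity)]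
    linarith
  have hmain := hA.trans (sum_prod_le_exp_condDiv_mul_sum_prod_add hG hP habs hε hd_pos x A)
  rw [neg_mul, Real.exp_neg, ← div_eq_mul_inv, div_le_iff₀' (Real.exp_pos _)]
  linarith

/-- **Lemma 6 (change of measure).**  Let `G, P` be stochastic matrices on the same
finite alphabets with `g_{y|x} > 0 → p_{y|x} > 0`.  For every `δ > 0` and `ε > 0` there
exists `d₀ = d₀(ε,δ,G,P)` such that for all `d > d₀`, all input strings `x ∈ X^d`, and
all events `A ⊆ Y^d`: if the product law of `G` gives `A` probability at least `δ`,
then the product law of `P` gives it probability at least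
`(δ/2)·exp(-d(D(G‖P|r(x)) + ε))`, where `r(x)` is the type of `x`. -/
theorem change_of_measure
    {X Y : Type} [Fintype X] [Fintype Y] [DecidableEq X]
    (G P : X → Y → ℝ) (hG : IsStochastic G) (hP : IsStochastic P)
    (habs : ∀ x y, 0 < G x y → 0 < P x y)
    (δ ε : ℝ) (hδ : 0 < δ) (hε : 0 < ε) :
    ∃ d0 : ℕ, ∀ d : ℕ, d0 < d → ∀ x : Fin d → X, ∀ A : Finset (Fin d → Y),
      δ ≤ (∑ y ∈ A, ∏ t, G (x t) (y t)) →
      (δ / 2) * Real.exp (-(d : ℝ) * (condDiv G P (empDist x) + ε)) ≤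
        ∑ y ∈ A, ∏ t, P (x t) (y t) :=
  change_of_measure_general G P hG (fun x => (hP x).1) habs δ ε hδ hε

end
end

section
/- (Lemma 10, part 1: conditional type concentration.) Let X, Y be finite alphabets and G = (g_{y|x}) a stochastic matrix. For epsilon_1, epsilon_2 > 0 and x in X^d, define the conditionally typical set J_x^{epsilon_1, epsilon_2} as the set of y in Y^d such that for every letter x in X, either n_x(x)/d < epsilon_2, or for every y in Y, n_{x,y}(x,y)/n_x(x) lies in the open interval (g_{y|x} - epsilon_1, g_{y|x} + epsilon_1); here n_{x,y}(x,y) counts the positions t with (x_t, y_t) = (x,y) and n_x(x) counts positions with x_t = x. Then for every epsilon_1, epsilon_2 > 0 there exists a constant K > 0 (depending only on G, epsilon_1, epsilon_2) such that for every d >= 1 and every x in X^d, the product conditional law satisfies P_G(Y_1^d in J_x^{epsilon_1, epsilon_2} | X_1^d = x) >= 1 - |X| |Y| exp(-K d). -/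
open scoped BigOperators Classical

noncomputable section

/-- Count `n_x(x̄)` of positions of the string `x̄` equal to the letter `a`. -/
def nxCount {X : Type} [Fintype X] [DecidableEq X] {d : ℕ} (x : Fin d → X) (a : X) : ℕ :=
  (Finset.univ.filter fun t => x t = a).card

/-- Joint count `n_{x,y}(x̄,ȳ)` of positions `t` with `(x̄ t, ȳ t) = (a,b)`. -/
def nxyCount {X Y : Type} [Fintype X] [Fintype Y] [DecidableEq X] [DecidableEq Y]
    {d : ℕ} (x : Fin d → X) (y : Fin d → Y) (a : X) (b : Y) : ℕ :=
  (Finset.univ.filter fun t => x t = a ∧ y t = b).card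

/-- The conditionally typical set `J_x^{ε₁,ε₂}`: `ȳ` is typical for `x̄` if for every
input letter `a`, either `a` is rare in `x̄` (`n_a/d < ε₂`) or every conditional
relative frequency `n_{a,b}/n_a` is within `ε₁` of `g_{b|a}`. -/
def CondTypical {X Y : Type} [Fintype X] [Fintype Y] [DecidableEq X] [DecidableEq Y]
    (G : X → Y → ℝ) (ε1 ε2 : ℝ) {d : ℕ} (x : Fin d → X) (y : Fin d → Y) : Prop :=
  ∀ a : X, ((nxCount x a : ℝ) / d < ε2) ∨
    ∀ b : Y, (nxyCount x y a b : ℝ) / (nxCount x a) ∈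
      Set.Ioo (G a b - ε1) (G a b + ε1)

/-!
Fix an input letter `a` that is not rare in `x`, so that `n_a ≥ ε₂ d`, and an output letter `b`.
Under the product law `n_{a,b}` is a sum of `n_a` independent indicators of mean `g_{b|a}`, so by
Hoeffding it reaches `n_a (g_{b|a} + δ)` with probability at most
`exp (-2 δ² n_a) ≤ exp (-2 δ² ε₂ d)`. Lower deviations need no tail bound of their own: the
frequencies `n_{a,b} / n_a` and the `g_{b|a}` both sum to one over `b`, so if no frequency has an
excess of `δ`, none has a deficit of more than `(|Y| - 1) δ`. With `δ = ε₁ / (|Y| + 1)` it is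
therefore enough to exclude the at most `|X| |Y|` upper deviations, hence the prefactor.
-/

open MeasureTheory ProbabilityTheory

lemma measureReal_sum_integral_add_le_sum_le {Ω ι : Type*} {mΩ : MeasurableSpace Ω}
    {μ : Measure Ω} {X : ι → Ω → ℝ} (hX : iIndepFun X μ) {s : Finset ι}
    {a b : ℝ} (hmeas : ∀ i ∈ s, AEMeasurable (X i) μ)
    (hmem : ∀ i ∈ s, ∀ᵐ ω ∂μ, X i ω ∈ Set.Icc a b) {ε : ℝ} (hε : 0 ≤ ε) :
    μ.real {ω | ∑ i ∈ s, μ[X i] + ε ≤ ∑ i ∈ s, X i ω} ≤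
      Real.exp (-(2 * ε ^ 2 / (s.card * (b - a) ^ 2))) := by
  have := hX.isProbabilityMeasure
  have hcentred : iIndepFun (fun i ω => X i ω - μ[X i]) μ :=
    hX.comp (fun i r => r - ∫ ω, X i ω ∂μ) fun i => measurable_id.sub_const _
  have hoeffding := HasSubgaussianMGF.measure_sum_ge_le_of_iIndepFun hcentred
    (fun i hi => hasSubgaussianMGF_of_mem_Icc (hmeas i hi) (hmem i hi)) hε
  convert hoeffding using 2
  · simp only [Finset.sum_sub_distrib, le_sub_iff_add_le']
  · simp only [Finset.sum_const, nsmul_eq_mul]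
    push_cast
    rw [div_pow, Real.norm_eq_abs, sq_abs]
    field_simp

lemma sub_card_sub_one_mul_le_of_sum_eq {ι R : Type*} [CommRing R] [LinearOrder R]
    [IsStrictOrderedRing R] {s : Finset ι} {f g : ι → R} {δ : R}
    (hsum : ∑ i ∈ s, f i = ∑ i ∈ s, g i) (hle : ∀ i ∈ s, f i ≤ g i + δ) {i : ι} (hi : i ∈ s) :
    g i - (s.card - 1) * δ ≤ f i := by
  have hslack : g i + δ - f i ≤ ∑ j ∈ s, (g j + δ - f j) :=
    Finset.single_le_sum (f := fun j => g j + δ - f j)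
      (fun j hj => sub_nonneg.mpr (hle j hj)) hi
  have htotal : ∑ j ∈ s, (g j + δ - f j) = s.card * δ := by
    simp [Finset.sum_sub_distrib, Finset.sum_add_distrib, hsum]
  linarith

namespace IsStochastic

variable {X Y : Type} [Fintype X] [Fintype Y] [MeasurableSpace Y] {G : X → Y → ℝ}
  {ι : Type*} [Fintype ι]

/-- The row of the stochastic matrix at the input letter `a`, as a probability mass function on
output letters. -/
def rowPMF (hG : IsStochastic G) (a : X) : PMF Y :=
  PMF.ofFintype (fun b => ENNReal.ofReal (G a b)) <| by
    rw [← ENNReal.ofReal_sum_of_nonneg fun b _ => (hG a).1 b, (hG a).2, ENNReal.ofReal_one]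

/-- The product conditional law `P_G(· | x)` of the output string given the input string `x`:
the output letters are independent, the one at position `t` having law `rowPMF (x t)`. -/
def outputLaw (hG : IsStochastic G) (x : ι → X) : Measure (ι → Y) :=
  Measure.pi fun t => (hG.rowPMF (x t)).toMeasure

instance (hG : IsStochastic G) (x : ι → X) : IsProbabilityMeasure (hG.outputLaw x) :=
  inferInstanceAs (IsProbabilityMeasure (Measure.pi _))

variable [MeasurableSingletonClass Y]

lemma rowPMF_toMeasure_real_singleton (hG : IsStochastic G) (a : X) (b : Y) :
    (hG.rowPMF a).toMeasure.real {b} = G a b := by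
  rw [measureReal_def, PMF.toMeasure_apply_singleton _ _ (measurableSet_singleton b), rowPMF,
    PMF.ofFintype_apply, ENNReal.toReal_ofReal ((hG a).1 b)]

lemma outputLaw_real_singleton (hG : IsStochastic G) (x : ι → X) (y : ι → Y) :
    (hG.outputLaw x).real {y} = ∏ t, G (x t) (y t) := by
  simp_rw [measureReal_def, outputLaw, Measure.pi_singleton, ENNReal.toReal_prod,
    ← measureReal_def, rowPMF_toMeasure_real_singleton]

lemma outputLaw_real_setOf [DecidableEq ι] (hG : IsStochastic G) (x : ι → X)
    (p : (ι → Y) → Prop) :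
    (hG.outputLaw x).real {y | p y} = ∑ y, if p y then ∏ t, G (x t) (y t) else 0 := by
  simp_rw [← hG.outputLaw_real_singleton x, ← Finset.sum_filter, sum_measureReal_singleton,
    Finset.coe_filter_univ]

end IsStochastic

section CondTypical

variable {X Y : Type} [Fintype X] [Fintype Y] [DecidableEq X] [DecidableEq Y] {d : ℕ}
  {G : X → Y → ℝ} {δ ε1 ε2 : ℝ}

lemma sum_nxyCount (x : Fin d → X) (y : Fin d → Y) (a : X) :
    ∑ b, nxyCount x y a b = nxCount x a := by
  simp only [nxCount, nxyCount, ← Finset.filter_filter]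
  exact (Finset.card_eq_sum_card_fiberwise fun _ _ => Finset.mem_univ _).symm

lemma nxyCount_eq_sum_indicator (x : Fin d → X) (y : Fin d → Y) (a : X) (b : Y) :
    (nxyCount x y a b : ℝ) = ∑ t with x t = a, Set.indicator {b} 1 (y t) := by
  simp [nxyCount, Set.indicator_apply, Finset.sum_boole, Finset.filter_filter]

namespace IsStochastic

lemma outputLaw_real_mul_add_le_nxyCount_le [MeasurableSpace Y] [MeasurableSingletonClass Y]
    (hG : IsStochastic G) (hδ : 0 ≤ δ) (x : Fin d → X) (a : X) (b : Y) :
    (hG.outputLaw x).real {y | nxCount x a * (G a b + δ) ≤ nxyCount x y a b} ≤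
      Real.exp (-(2 * δ ^ 2 * nxCount x a)) := by
  let hit : Y → ℝ := Set.indicator {b} 1
  have hhit : Measurable hit := measurable_one.indicator (measurableSet_singleton b)
  have hindep : iIndepFun (fun t y => hit (y t)) (hG.outputLaw x) :=
    iIndepFun_pi fun _ => hhit.aemeasurable
  have hmean (t : Fin d) : ∫ y, hit (y t) ∂hG.outputLaw x = G (x t) b := by
    rw [outputLaw, integral_comp_eval hhit.aestronglyMeasurable,
      integral_indicator_one (measurableSet_singleton b), rowPMF_toMeasure_real_singleton]
  have hmem (y : Y) : hit y ∈ Set.Icc 0 1 :=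
    ⟨Set.indicator_nonneg (fun _ _ => zero_le_one) y,
      Set.indicator_le_self' (fun _ _ => zero_le_one) y⟩
  have hoeffding := measureReal_sum_integral_add_le_sum_le hindep
    (s := {t | x t = a}) (fun t _ => (hhit.comp (measurable_pi_apply t)).aemeasurable)
    (fun t _ => ae_of_all _ fun y => hmem (y t)) (ε := nxCount x a * δ) (by positivity)
  have hmeans : ∑ t with x t = a, ∫ y, hit (y t) ∂hG.outputLaw x = nxCount x a * G a b := by
    rw [Finset.sum_congr rfl fun t ht => by rw [hmean, (Finset.mem_filter.mp ht).2],
      Finset.sum_const, nsmul_eq_mul, nxCount]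
  have hexponent : 2 * (nxCount x a * δ) ^ 2 / (nxCount x a * (1 - 0) ^ 2) =
      2 * δ ^ 2 * nxCount x a := by
    rcases eq_or_ne (nxCount x a : ℝ) 0 with h | h
    · simp [h]
    · field_simp
      ring
  rw [hmeans, ← nxCount, hexponent] at hoeffding
  simpa only [nxyCount_eq_sum_indicator, mul_add] using hoeffding

lemma exists_add_le_nxyCount_of_not_condTypical (hG : IsStochastic G) (hε2 : 0 < ε2) (hδ : 0 < δ)
    (hδε : Fintype.card Y * δ ≤ ε1) {x : Fin d → X} {y : Fin d → Y}
    (hy : ¬CondTypical G ε1 ε2 x y) :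
    ∃ a b, ε2 * d ≤ nxCount x a ∧ nxCount x a * (G a b + δ) ≤ nxyCount x y a b := by
  simp only [CondTypical, not_forall, not_or, not_lt] at hy
  obtain ⟨a, ha, b, hb⟩ := hy
  have hn : (0 : ℝ) < nxCount x a := by
    by_contra! hn
    exact (hε2.trans_le ha).not_ge (div_nonpos_of_nonpos_of_nonneg hn d.cast_nonneg)
  by_contra! hexcess
  have hfreq (c : Y) : (nxyCount x y a c : ℝ) / nxCount x a < G a c + δ :=
    (div_lt_iff₀' hn).mpr (hexcess a c (mul_le_of_le_div₀ hn.le d.cast_nonneg ha))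
  have hsum : ∑ c, (nxyCount x y a c : ℝ) / nxCount x a = ∑ c, G a c := by
    rw [← Finset.sum_div, ← Nat.cast_sum, sum_nxyCount, div_self hn.ne', (hG a).2]
  have hlower := sub_card_sub_one_mul_le_of_sum_eq hsum (fun c _ => (hfreq c).le)
    (Finset.mem_univ b)
  rw [Finset.card_univ] at hlower
  have hcard : (1 : ℝ) ≤ Fintype.card Y := by exact_mod_cast Fintype.card_pos_iff.mpr ⟨b⟩
  have hδε1 : δ ≤ ε1 := (le_mul_of_one_le_left hδ.le hcard).trans hδε
  exact hb ⟨by linarith, by linarith [hfreq b]⟩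

lemma outputLaw_real_not_condTypical_le [MeasurableSpace Y] [MeasurableSingletonClass Y]
    (hG : IsStochastic G) (hε2 : 0 < ε2) (hδ : 0 < δ) (hδε : Fintype.card Y * δ ≤ ε1)
    (x : Fin d → X) :
    (hG.outputLaw x).real {y | ¬CondTypical G ε1 ε2 x y} ≤
      Fintype.card X * Fintype.card Y * Real.exp (-(2 * δ ^ 2 * ε2) * d) := by
  let excess (a : X) (b : Y) : Set (Fin d → Y) :=
    {y | ε2 * d ≤ nxCount x a ∧ nxCount x a * (G a b + δ) ≤ nxyCount x y a b}
  have hcover : {y | ¬CondTypical G ε1 ε2 x y} ⊆ ⋃ ab : X × Y, excess ab.1 ab.2 := by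
    intro y hy
    obtain ⟨a, b, hab⟩ := hG.exists_add_le_nxyCount_of_not_condTypical hε2 hδ hδε hy
    exact Set.mem_iUnion.mpr ⟨(a, b), hab⟩
  have hexcess (a : X) (b : Y) :
      (hG.outputLaw x).real (excess a b) ≤ Real.exp (-(2 * δ ^ 2 * ε2) * d) := by
    by_cases ha : ε2 * d ≤ nxCount x a
    · simp only [excess, ha, true_and]
      refine (hG.outputLaw_real_mul_add_le_nxyCount_le hδ.le x a b).trans (Real.exp_le_exp.mpr ?_)
      linarith [mul_le_mul_of_nonneg_left ha (by positivity : 0 ≤ 2 * δ ^ 2)]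
    · simp only [excess, ha, false_and, Set.ofPred_false, measureReal_empty]
      positivity
  calc (hG.outputLaw x).real {y | ¬CondTypical G ε1 ε2 x y}
      ≤ (hG.outputLaw x).real (⋃ ab : X × Y, excess ab.1 ab.2) := measureReal_mono hcover
    _ ≤ ∑ ab : X × Y, (hG.outputLaw x).real (excess ab.1 ab.2) :=
        measureReal_iUnion_fintype_le _
    _ ≤ ∑ _ab : X × Y, Real.exp (-(2 * δ ^ 2 * ε2) * d) :=
        Finset.sum_le_sum fun ab _ => hexcess ab.1 ab.2
    _ = Fintype.card X * Fintype.card Y * Real.exp (-(2 * δ ^ 2 * ε2) * d) := by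
        rw [Finset.sum_const, Finset.card_univ, Fintype.card_prod, nsmul_eq_mul, Nat.cast_mul]

end IsStochastic

end CondTypical

/-- **Lemma 10, part 1 (conditional type concentration).**  For every stochastic matrix
`G` and `ε₁, ε₂ > 0` there is a constant `K > 0` such that for every `d ≥ 1` and every
input string `x ∈ X^d`, the product conditional law of `G` gives the conditionally
typical set probability at least `1 - |X||Y| exp(-K d)`. -/
theorem conditional_type_concentration
    {X Y : Type} [Fintype X] [Fintype Y] [DecidableEq X] [DecidableEq Y]
    (G : X → Y → ℝ) (hG : IsStochastic G)
    (ε1 ε2 : ℝ) (hε1 : 0 < ε1) (hε2 : 0 < ε2) :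
    ∃ K : ℝ, 0 < K ∧ ∀ d : ℕ, 1 ≤ d → ∀ x : Fin d → X,
      1 - (Fintype.card X : ℝ) * (Fintype.card Y : ℝ) * Real.exp (-K * d) ≤
        ∑ y : Fin d → Y, (if CondTypical G ε1 ε2 x y then ∏ t, G (x t) (y t) else 0) := by
  let _ : MeasurableSpace Y := ⊤
  let δ : ℝ := ε1 / (Fintype.card Y + 1)
  have hδ : 0 < δ := by positivity
  have hδε : Fintype.card Y * δ ≤ ε1 := by
    rw [← mul_div_assoc, div_le_iff₀ (by positivity)]
    linarith
  refine ⟨2 * δ ^ 2 * ε2, by positivity, fun d _ x => ?_⟩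
  have hatypical := hG.outputLaw_real_not_condTypical_le hε2 hδ hδε x
  have hcompl := probReal_compl_eq_one_sub (μ := hG.outputLaw x)
    (s := {y | CondTypical G ε1 ε2 x y}) (Set.toFinite _).measurableSet
  rw [Set.compl_ofPred] at hcompl
  rw [← hG.outputLaw_real_setOf]
  linarith

end
end

section
/- (Lemma 8, union bound for the FIFO repeat-until-received queue.) Let 0 < R' < 1 and 0 < beta < 1, and let (Z_t)_{t >= 1} be i.i.d. Bernoulli random variables with P(Z_t = 1) = 1 - beta (success indicators of an erasure channel). Bit k arrives at time a_k = ceil(k/R'). Define FIFO departure times recursively by D_0 = 0 and D_k = min { t : t >= max(D_{k-1} + 1, a_k) and Z_t = 1 }. Then for every bit index i >= 1 and every delay d >= 0, P( D_i > a_i + d ) <= sum_{k=1}^{i} P( sum_{t = a_k}^{a_i + d} Z_t <= i - k ). -/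
open scoped BigOperators

noncomputable section

/-- The success indicators `Z_1, …, Z_N` read off from a finite sample `ω`:
`zOf N ω t = ω (t-1)` for `1 ≤ t ≤ N`, and `true` for times beyond the horizon
(so that the FIFO recursion below is everywhere well defined; the event considered
only depends on the first `N` indicators). -/
def zOf (N : ℕ) (ω : Fin N → Bool) : ℕ → Bool :=
  fun t => if h : t - 1 < N ∧ 1 ≤ t then ω ⟨t - 1, h.1⟩ else true

/-- The i.i.d. Bernoulli(`1-β`) product weight of the sample `ω` (success with
probability `1-β`, erasure with probability `β`). -/
def bernWeight (β : ℝ) {N : ℕ} (ω : Fin N → Bool) : ℝ :=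
  ∏ t, (if ω t then 1 - β else β)

/-!
The union bound is the pathwise fact that bit `i` departs by time `n` as soon as, for every
`1 ≤ k ≤ i`, the window `[a k, n]` contains more than `i - k` successes. This goes by induction
on `n`: an erasure at the last slot leaves all counts unchanged, whereas a success there lowers
each count by at most one, so that bit `i - 1` departs strictly before this slot and bit `i`,
which has already arrived, departs at the latest in it.
-/

/-- The number of successes of `z` in the time window `[m, n]`, endpoints included. -/
def successCount (z : ℕ → Bool) (m n : ℕ) : ℕ :=
  ∑ t ∈ Finset.Icc m n, if z t then 1 else 0

/-- `D` is the sequence of FIFO departure times for arrival times `a` and success indicators `z`.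
Bits are numbered from `1`, and `D 0 = 0` is a convention. Each minimum is required to be attained,
so no such `D` exists when `z` has only finitely many successes; `sInf ∅ = 0` would instead make a
bit that is never delivered look punctual. -/
structure IsFifoDeparture (a : ℕ → ℕ) (z : ℕ → Bool) (D : ℕ → ℕ) : Prop where
  zero : D 0 = 0
  succ (k : ℕ) : IsLeast {t | max (D k + 1) (a (k + 1)) ≤ t ∧ z t = true} (D (k + 1))

section Pathwise

variable {a D : ℕ → ℕ} {z : ℕ → Bool} {m n : ℕ}

lemma le_of_successCount_pos (h : 0 < successCount z m n) : m ≤ n := by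
  by_contra hmn
  simp only [successCount, Finset.Icc_eq_empty hmn, Finset.sum_empty, lt_irrefl] at h

lemma successCount_succ_le (z : ℕ → Bool) (m n : ℕ) :
    successCount z m (n + 1) ≤ successCount z m n + if z (n + 1) then 1 else 0 := by
  by_cases hmn : m ≤ n + 1
  · exact (Finset.sum_Icc_succ_top hmn _).le
  · simp only [successCount, Finset.Icc_eq_empty hmn, Finset.sum_empty, zero_le]

lemma IsFifoDeparture.of_sInf (hz : ∀ m, ∃ t, m ≤ t ∧ z t = true) (hD0 : D 0 = 0)
    (hD : ∀ k, D (k + 1) = sInf {t | max (D k + 1) (a (k + 1)) ≤ t ∧ z t = true}) :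
    IsFifoDeparture a z D where
  zero := hD0
  succ k := hD k ▸ isLeast_csInf (hz _)

lemma IsFifoDeparture.le_of_forall_lt_successCount (hD : IsFifoDeparture a z D) (ha : 1 ≤ a 1)
    {i : ℕ} (h : ∀ k ∈ Finset.Icc 1 i, i - k < successCount z (a k) n) : D i ≤ n := by
  induction n generalizing i with
  | zero =>
    rcases i.eq_zero_or_pos with rfl | hi
    · exact hD.zero.le
    · have ha0 : a 1 ≤ 0 :=
        le_of_successCount_pos (Nat.zero_lt_of_lt (h 1 (Finset.mem_Icc.mpr ⟨le_rfl, hi⟩)))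
      omega
  | succ n ih =>
    have hcount := fun k => successCount_succ_le z (a k) n
    by_cases hz : z (n + 1) = true
    · simp only [hz, if_true] at hcount
      cases i with
      | zero => exact hD.zero.trans_le (Nat.zero_le _)
      | succ j =>
        have hprev : D j ≤ n := ih fun k hk => by
          obtain ⟨hk1, hkj⟩ := Finset.mem_Icc.mp hk
          have := h k (Finset.mem_Icc.mpr ⟨hk1, by omega⟩)
          have := hcount k
          omega
        have harrived : a (j + 1) ≤ n + 1 :=
          le_of_successCount_pos (Nat.zero_lt_of_lt (h (j + 1) (by simp)))
        exact (hD.succ j).2 ⟨max_le (Nat.succ_le_succ hprev) harrived, hz⟩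
    · simp only [hz, Bool.false_eq_true, if_false, add_zero] at hcount
      exact (ih fun k hk => (h k hk).trans_le (hcount k)).trans n.le_succ

lemma IsFifoDeparture.exists_successCount_le (hD : IsFifoDeparture a z D) (ha : 1 ≤ a 1) {i : ℕ}
    (hlate : n < D i) : ∃ k ∈ Finset.Icc 1 i, successCount z (a k) n ≤ i - k := by
  contrapose! hlate
  exact hD.le_of_forall_lt_successCount ha hlate

end Pathwise

lemma sum_mul_ite_le_of_imp_exists {Ω κ R : Type*} [Semiring R] [PartialOrder R] [IsOrderedRing R]
    {S : Finset Ω} {K : Finset κ} {w : Ω → R} {p : Ω → Prop} {q : κ → Ω → Prop}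
    [DecidablePred p] [∀ k, DecidablePred (q k)] (hw : ∀ ω ∈ S, 0 ≤ w ω)
    (hpq : ∀ ω ∈ S, p ω → ∃ k ∈ K, q k ω) :
    ∑ ω ∈ S, w ω * (if p ω then 1 else 0) ≤
      ∑ k ∈ K, ∑ ω ∈ S, w ω * (if q k ω then 1 else 0) := by
  rw [Finset.sum_comm]
  refine Finset.sum_le_sum fun ω hω => ?_
  rw [← Finset.mul_sum]
  refine mul_le_mul_of_nonneg_left ?_ (hw ω hω)
  have hnonneg : ∀ k ∈ K, (0 : R) ≤ if q k ω then 1 else 0 :=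
    fun _ _ => ite_nonneg zero_le_one le_rfl
  split_ifs with hp
  · obtain ⟨k, hk, hqk⟩ := hpq ω hω hp
    calc (1 : R) = if q k ω then 1 else 0 := (if_pos hqk).symm
      _ ≤ ∑ k ∈ K, if q k ω then 1 else 0 := Finset.single_le_sum hnonneg hk
  · exact Finset.sum_nonneg hnonneg

theorem fifo_union_bound_general {Ω : Type*} [Fintype Ω] {w : Ω → ℝ} (hw : ∀ ω, 0 ≤ w ω)
    {a : ℕ → ℕ} (ha : 1 ≤ a 1) {Z : Ω → ℕ → Bool} {D : Ω → ℕ → ℕ}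
    (hD : ∀ ω, IsFifoDeparture a (Z ω) (D ω)) (i n : ℕ) :
    ∑ ω, w ω * (if n < D ω i then 1 else 0) ≤
      ∑ k ∈ Finset.Icc 1 i, ∑ ω, w ω * (if successCount (Z ω) (a k) n ≤ i - k then 1 else 0) :=
  sum_mul_ite_le_of_imp_exists (fun ω _ => hw ω) fun ω _ => (hD ω).exists_successCount_le ha

lemma bernWeight_nonneg {β : ℝ} (hβ0 : 0 ≤ β) (hβ1 : β ≤ 1) {N : ℕ} (ω : Fin N → Bool) :
    0 ≤ bernWeight β ω :=
  Finset.prod_nonneg fun _ _ => ite_nonneg (sub_nonneg.mpr hβ1) hβ0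

lemma exists_ge_zOf_eq_true {N : ℕ} (ω : Fin N → Bool) (m : ℕ) :
    ∃ t, m ≤ t ∧ zOf N ω t = true :=
  ⟨m + N + 1, by omega, dif_neg (by omega)⟩

/-- **Lemma 8 (union bound for the FIFO repeat-until-received queue).**  Let
`0 < R' < 1` and `0 < β < 1`, with i.i.d. Bernoulli(`1-β`) success indicators `Z_t`.
Bit `k` arrives at `a k = ⌈k/R'⌉`, and FIFO departure times satisfy `D 0 = 0` and
`D (k+1) = min {t : t ≥ max (D k + 1) (a (k+1)) ∧ Z_t = 1}`.  Then for every bit index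
`i ≥ 1` and delay `d ≥ 0` (with horizon `N = a i + d`),
`P(D i > a i + d) ≤ ∑_{k=1}^i P(∑_{t=a k}^{a i + d} Z_t ≤ i - k)`. -/
theorem fifo_union_bound
    (R' β : ℝ) (hR'0 : 0 < R') (hR'1 : R' < 1) (hβ0 : 0 < β) (hβ1 : β < 1)
    (a : ℕ → ℕ) (ha : ∀ k, a k = Nat.ceil ((k : ℝ) / R'))
    (Dep : (ℕ → Bool) → ℕ → ℕ)
    (hD0 : ∀ z, Dep z 0 = 0)
    (hDk : ∀ z k, Dep z (k + 1) =
      sInf {t : ℕ | max (Dep z k + 1) (a (k + 1)) ≤ t ∧ z t = true})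
    (i d : ℕ) (hi : 1 ≤ i) :
    (∑ ω : Fin (a i + d) → Bool,
        bernWeight β ω * (if a i + d < Dep (zOf (a i + d) ω) i then 1 else 0))
    ≤ ∑ k ∈ Finset.Icc 1 i,
        ∑ ω : Fin (a i + d) → Bool,
          bernWeight β ω *
            (if (∑ t ∈ Finset.Icc (a k) (a i + d),
                  (if zOf (a i + d) ω t then 1 else 0)) ≤ i - k
              then (1 : ℝ) else 0) :=
  fifo_union_bound_general (bernWeight_nonneg hβ0.le hβ1.le)
    (ha 1 ▸ Nat.one_le_ceil_iff.mpr (by positivity))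
    (fun ω => .of_sInf (exists_ge_zOf_eq_true ω) (hD0 _) (hDk _)) i (a i + d)

end
end

section
/- (Slope of the Theorem 5 achievable region near capacity.) Let E_0 : [0, infinity) -> R satisfy E_0(0) = 0, admit a second-order Taylor expansion at 0: E_0(rho) = C rho + (1/2) E_0''(0) rho^2 + o(rho^2) as rho -> 0+, with C > 0 and E_0''(0) <= 0, and suppose E_0(1) > 0 and E_0(rho) > 0 for all sufficiently small rho > 0. Define E'(rho) = (1/E_0(rho) + 1/E_0(1))^{-1} and R(rho) = E'(rho)/rho for rho > 0. Then lim_{rho -> 0+} R(rho) = C and lim_{rho -> 0+} E'(rho)/(R(rho) - C) = -E_0(1) / ( C - (E_0(1)/(2C)) E_0''(0) ); in particular the parametric curve (R(rho), E'(rho)) approaches the point (C, 0) with the strictly negative slope -E_0(1)/(C - (E_0(1)/(2C)) E_0''(0)). -/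
/-!
Dividing by `E'` linearises the slope: `(R - C) / E' = 1 / ρ - C / E' = (1 / ρ - C / E0 ρ) - C / a`,
where `a = E0 1`. Here `1 / ρ - C / E0 ρ = ((E0 ρ - C ρ) / ρ²) / (E0 ρ / ρ)` tends to
`E0''(0) / (2 C)`, so the slope tends to the inverse of `E0''(0) / (2 C) - C / a`.
-/

open Filter Asymptotics

noncomputable section

open scoped Topology

section SecondOrder

variable {𝕜 : Type*} [NormedField 𝕜] {l : Filter 𝕜} {f : 𝕜 → 𝕜} {b C : 𝕜}

theorem tendsto_sub_linear_div_sq (hl : l ≤ 𝓝[≠] 0)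
    (hf : (fun ρ => f ρ - (C * ρ + b * ρ ^ 2)) =o[l] fun ρ => ρ ^ 2) :
    Tendsto (fun ρ => (f ρ - C * ρ) / ρ ^ 2) l (𝓝 b) := by
  have hsum := hf.tendsto_div_nhds_zero.add_const b
  rw [zero_add] at hsum
  refine hsum.congr' ?_
  filter_upwards [hl self_mem_nhdsWithin] with ρ (hρ : ρ ≠ 0)
  field_simp
  ring

theorem tendsto_div_self_of_sub_linear_div_sq (hl : l ≤ 𝓝[≠] 0)
    (hf : Tendsto (fun ρ => (f ρ - C * ρ) / ρ ^ 2) l (𝓝 b)) :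
    Tendsto (fun ρ => f ρ / ρ) l (𝓝 C) := by
  have hid : Tendsto (fun ρ => ρ) l (𝓝 0) := hl.trans nhdsWithin_le_nhds
  have hsum := (hid.mul hf).const_add C
  rw [zero_mul, add_zero] at hsum
  refine hsum.congr' ?_
  filter_upwards [hl self_mem_nhdsWithin] with ρ (hρ : ρ ≠ 0)
  field_simp
  ring

theorem tendsto_inv_sub_div_of_sub_linear_div_sq (hl : l ≤ 𝓝[≠] 0) (hC : C ≠ 0)
    (hf : Tendsto (fun ρ => (f ρ - C * ρ) / ρ ^ 2) l (𝓝 b)) :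
    Tendsto (fun ρ => ρ⁻¹ - C / f ρ) l (𝓝 (b / C)) := by
  have hdiv : Tendsto (fun ρ => f ρ / ρ) l (𝓝 C) := tendsto_div_self_of_sub_linear_div_sq hl hf
  refine (hf.div hdiv hC).congr' ?_
  filter_upwards [hdiv.eventually_ne hC] with ρ hquot
  obtain ⟨hfρ, hρ⟩ := div_ne_zero_iff.mp hquot
  simp only [Pi.div_apply]
  field_simp

end SecondOrder

section TimeSharing

variable {𝕜 : Type*}

/-- The fixed-delay exponent `E'(ρ)` of the time-sharing scheme: the message stream has Gallager
function `E`, and `a` is the exponent of the punctuation stream, `E 1` in the paper. -/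
def timeSharingExponent [Field 𝕜] (E : 𝕜 → 𝕜) (a ρ : 𝕜) : 𝕜 :=
  ((E ρ)⁻¹ + a⁻¹)⁻¹

/-- The rate `R(ρ) = E'(ρ) / ρ` at which the time-sharing scheme attains the exponent `E'(ρ)`. -/
def timeSharingRate [Field 𝕜] (E : 𝕜 → 𝕜) (a ρ : 𝕜) : 𝕜 :=
  timeSharingExponent E a ρ / ρ

theorem timeSharingRate_eq_inv [Field 𝕜] (E : 𝕜 → 𝕜) (a ρ : 𝕜) :
    timeSharingRate E a ρ = ((E ρ / ρ)⁻¹ + ρ * a⁻¹)⁻¹ := by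
  rw [timeSharingRate, timeSharingExponent, div_eq_mul_inv, ← mul_inv, inv_div, add_mul,
    div_eq_inv_mul, mul_comm a⁻¹]

theorem timeSharingExponent_div_rate_sub [Field 𝕜] {E : 𝕜 → 𝕜} {a ρ : 𝕜} (C : 𝕜)
    (hE : timeSharingExponent E a ρ ≠ 0) :
    timeSharingExponent E a ρ / (timeSharingRate E a ρ - C) =
      (ρ⁻¹ - C / E ρ - C / a)⁻¹ := by
  have hlinear : (timeSharingRate E a ρ - C) / timeSharingExponent E a ρ =
      ρ⁻¹ - C / E ρ - C / a :=
    calc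
      (timeSharingRate E a ρ - C) / timeSharingExponent E a ρ
          = ρ⁻¹ - C * (timeSharingExponent E a ρ)⁻¹ := by
        rw [timeSharingRate, sub_div, div_div_cancel_left' hE, div_eq_mul_inv C]
      _ = ρ⁻¹ - C * ((E ρ)⁻¹ + a⁻¹) := by rw [timeSharingExponent, inv_inv]
      _ = ρ⁻¹ - C / E ρ - C / a := by ring
  rw [← hlinear, inv_div]

variable [NormedField 𝕜] {l : Filter 𝕜} {E : 𝕜 → 𝕜} {b C : 𝕜}

theorem tendsto_timeSharingRate (hl : l ≤ 𝓝 0) (hC : C ≠ 0) (a : 𝕜)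
    (hE : Tendsto (fun ρ => E ρ / ρ) l (𝓝 C)) :
    Tendsto (timeSharingRate E a) l (𝓝 C) := by
  have hid : Tendsto (fun ρ => ρ) l (𝓝 0) := hl
  have hinv : Tendsto (fun ρ => (E ρ / ρ)⁻¹ + ρ * a⁻¹) l (𝓝 C⁻¹) := by
    simpa using (hE.inv₀ hC).add (hid.mul_const a⁻¹)
  simpa only [← timeSharingRate_eq_inv, inv_inv] using hinv.inv₀ (inv_ne_zero hC)

theorem tendsto_timeSharingExponent_div_rate_sub {a : 𝕜} (hl : l ≤ 𝓝[≠] 0) (hC : C ≠ 0)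
    (hslope : b / C - C / a ≠ 0) (hE : Tendsto (fun ρ => (E ρ - C * ρ) / ρ ^ 2) l (𝓝 b)) :
    Tendsto (fun ρ => timeSharingExponent E a ρ / (timeSharingRate E a ρ - C)) l
      (𝓝 (b / C - C / a)⁻¹) := by
  have hrate : Tendsto (timeSharingRate E a) l (𝓝 C) :=
    tendsto_timeSharingRate (hl.trans nhdsWithin_le_nhds) hC a
      (tendsto_div_self_of_sub_linear_div_sq hl hE)
  have hinv : Tendsto (fun ρ => ρ⁻¹ - C / E ρ - C / a) l (𝓝 (b / C - C / a)) :=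
    (tendsto_inv_sub_div_of_sub_linear_div_sq hl hC hE).sub_const _
  refine (hinv.inv₀ hslope).congr' ?_
  filter_upwards [hrate.eventually_ne hC] with ρ hρ
  exact (timeSharingExponent_div_rate_sub C (div_ne_zero_iff.mp hρ).1).symm

end TimeSharing

theorem timesharing_slope_near_capacity_general {l : Filter ℝ} (hl : l ≤ 𝓝[≠] 0) {E : ℝ → ℝ}
    {a C c2 : ℝ} (hC : 0 < C) (ha : 0 < a) (hc2 : a * c2 < 2 * C ^ 2)
    (htaylor : (fun ρ => E ρ - (C * ρ + c2 / 2 * ρ ^ 2)) =o[l] fun ρ => ρ ^ 2) :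
    Tendsto (timeSharingRate E a) l (𝓝 C) ∧
    Tendsto (fun ρ => timeSharingExponent E a ρ / (timeSharingRate E a ρ - C)) l
      (𝓝 (-a / (C - a / (2 * C) * c2))) ∧
    -a / (C - a / (2 * C) * c2) < 0 := by
  have hquad : Tendsto (fun ρ => (E ρ - C * ρ) / ρ ^ 2) l (𝓝 (c2 / 2)) :=
    tendsto_sub_linear_div_sq hl htaylor
  have hden : 0 < C - a / (2 * C) * c2 := by
    rw [sub_pos, div_mul_eq_mul_div, div_lt_iff₀ (by positivity)]
    linarith
  have hneg : -a / (C - a / (2 * C) * c2) < 0 := div_neg_of_neg_of_pos (neg_neg_of_pos ha) hden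
  have hslope : c2 / 2 / C - C / a = (-a / (C - a / (2 * C) * c2))⁻¹ := by
    field_simp
    ring
  refine ⟨tendsto_timeSharingRate (hl.trans nhdsWithin_le_nhds) hC.ne' a
    (tendsto_div_self_of_sub_linear_div_sq hl hquad), ?_, hneg⟩
  have hlim := tendsto_timeSharingExponent_div_rate_sub hl hC.ne'
    (hslope ▸ inv_ne_zero hneg.ne) hquad
  rwa [hslope, inv_inv] at hlim

/-- **Slope of the Theorem 5 achievable region near capacity.**  Let `E0` satisfy
`E0 0 = 0` and a second-order Taylor expansion `E0 ρ = C ρ + (1/2) E0''(0) ρ² + o(ρ²)`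
as `ρ → 0⁺`, with `C > 0` and `E0''(0) ≤ 0`; suppose `E0 1 > 0` and `E0 ρ > 0` for all
sufficiently small `ρ > 0`.  With `E'(ρ) = (1/E0 ρ + 1/E0 1)⁻¹` and `R(ρ) = E'(ρ)/ρ`,
one has `R(ρ) → C` and `E'(ρ)/(R(ρ) - C) → -E0(1)/(C - (E0(1)/(2C)) E0''(0))` as
`ρ → 0⁺`; the latter slope is strictly negative. -/
theorem timesharing_slope_near_capacity
    (E0 : ℝ → ℝ) (C c2 : ℝ) (hC : 0 < C) (hc2 : c2 ≤ 0) (hE00 : E0 0 = 0)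
    (hE01 : 0 < E0 1)
    (hpos : ∀ᶠ ρ in nhdsWithin 0 (Set.Ioi 0), 0 < E0 ρ)
    (htaylor : (fun ρ => E0 ρ - (C * ρ + c2 / 2 * ρ ^ 2))
      =o[nhdsWithin 0 (Set.Ioi 0)] fun ρ => ρ ^ 2) :
    Tendsto (fun ρ => ((E0 ρ)⁻¹ + (E0 1)⁻¹)⁻¹ / ρ) (nhdsWithin 0 (Set.Ioi 0))
      (nhds C) ∧
    Tendsto (fun ρ => ((E0 ρ)⁻¹ + (E0 1)⁻¹)⁻¹ /
        (((E0 ρ)⁻¹ + (E0 1)⁻¹)⁻¹ / ρ - C))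
      (nhdsWithin 0 (Set.Ioi 0))
      (nhds (-(E0 1) / (C - E0 1 / (2 * C) * c2))) ∧
    -(E0 1) / (C - E0 1 / (2 * C) * c2) < 0 := by
  have hconcave : E0 1 * c2 < 2 * C ^ 2 :=
    (mul_nonpos_of_nonneg_of_nonpos hE01.le hc2).trans_lt (by positivity)
  exact timesharing_slope_near_capacity_general (nhdsGT_le_nhdsNE 0) hC hE01 hconcave htaylor

end
end

section
/- (The feedback gain at rate 1/2 over the BEC is unbounded as beta -> 1/2.) For beta in (0, 1/2), let E_a = ln(1 - beta) - ln(beta) be the fixed-delay error exponent achieved with noiseless feedback at rate 1/2 bits per channel use over the binary erasure channel with erasure probability beta, and let E_sp = -ln(4 beta (1 - beta))/2 be the corresponding sphere-packing exponent. Then both quantities are strictly positive for beta in (0,1/2), and the ratio E_a/E_sp tends to infinity as beta -> (1/2)-: lim_{beta -> 1/2^-} ( ln((1-beta)/beta) ) / ( -ln(4 beta (1-beta))/2 ) = +infinity. -/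
open Filter

noncomputable section

/-!
Both exponents vanish at `β = 1/2`, and their derivatives `-1 / (β (1 - β))` and
`-(1 - 2β) / (2β (1 - β))` have ratio `(1 - 2β) / 2`. Thus `E_a` crosses zero with nonzero slope
while `E_sp` is tangent to zero there, and L'Hôpital's rule gives `E_sp / E_a → 0`. On the left of
`1/2` this ratio is positive, so its inverse tends to `+∞`.
-/

open scoped Topology

/-- The error exponent `E_a(1/2)` with respect to a fixed decoding delay, attained over the binary
erasure channel with erasure probability `β` and noiseless feedback at rate `1/2`. -/
def becFixedDelayExponent (β : ℝ) : ℝ :=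
  Real.log (1 - β) - Real.log β

/-- The sphere-packing exponent `E_sp(1/2) = D(1/2 ‖ β)`, in nats, of the binary erasure channel
with erasure probability `β` at rate `1/2`. -/
def becSpherePackingExponent (β : ℝ) : ℝ :=
  -Real.log (4 * β * (1 - β)) / 2

section Exponents

variable {β : ℝ}

theorem becFixedDelayExponent_pos (h0 : 0 < β) (h1 : β < 1 / 2) :
    0 < becFixedDelayExponent β :=
  sub_pos.2 (Real.log_lt_log h0 (by linarith))

theorem becSpherePackingExponent_pos (h0 : 0 < β) (h1 : β < 1) (hne : β ≠ 1 / 2) :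
    0 < becSpherePackingExponent β := by
  have arg_pos : 0 < 4 * β * (1 - β) := mul_pos (by linarith) (by linarith)
  have arg_lt_one : 4 * β * (1 - β) < 1 := by
    linarith [sq_pos_of_ne_zero (sub_ne_zero.2 hne)]
  exact half_pos (neg_pos.2 (Real.log_neg arg_pos arg_lt_one))

theorem becFixedDelayExponent_one_half : becFixedDelayExponent (1 / 2) = 0 := by
  norm_num [becFixedDelayExponent]

theorem becSpherePackingExponent_one_half : becSpherePackingExponent (1 / 2) = 0 := by
  norm_num [becSpherePackingExponent]

theorem hasDerivAt_becFixedDelayExponent (h0 : β ≠ 0) (h1 : β ≠ 1) :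
    HasDerivAt becFixedDelayExponent (-1 / (β * (1 - β))) β := by
  have h1' : 1 - β ≠ 0 := sub_ne_zero.2 h1.symm
  have deriv_eq : -1 / (1 - β) - β⁻¹ = -1 / (β * (1 - β)) := by
    field_simp
    ring
  exact ((((hasDerivAt_id' β).const_sub 1).log h1').sub (Real.hasDerivAt_log h0)).congr_deriv
    deriv_eq

theorem hasDerivAt_becSpherePackingExponent (h0 : β ≠ 0) (h1 : β ≠ 1) :
    HasDerivAt becSpherePackingExponent (-(1 - 2 * β) / (2 * β * (1 - β))) β := by
  have h1' : 1 - β ≠ 0 := sub_ne_zero.2 h1.symm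
  have arg_ne_zero : 4 * β * (1 - β) ≠ 0 := by simp [h0, h1']
  have arg_deriv : HasDerivAt (fun x ↦ 4 * x * (1 - x)) (4 * (1 - 2 * β)) β :=
    (((hasDerivAt_id' β).const_mul 4).mul ((hasDerivAt_id' β).const_sub 1)).congr_deriv (by ring)
  have deriv_eq : -(4 * (1 - 2 * β) / (4 * β * (1 - β))) / 2 =
      -(1 - 2 * β) / (2 * β * (1 - β)) := by
    field_simp
  exact (arg_deriv.log arg_ne_zero).neg.div_const 2 |>.congr_deriv deriv_eq

theorem tendsto_becSpherePackingExponent_div_becFixedDelayExponent :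
    Tendsto (fun β ↦ becSpherePackingExponent β / becFixedDelayExponent β)
      (𝓝[≠] (1 / 2)) (𝓝 0) := by
  have ne_endpoints : ∀ᶠ β : ℝ in 𝓝 (1 / 2), β ≠ 0 ∧ β ≠ 1 :=
    (eventually_ne_nhds (by norm_num)).and (eventually_ne_nhds (by norm_num))
  have hEsp := ne_endpoints.mono fun β h ↦ hasDerivAt_becSpherePackingExponent h.1 h.2
  have hEa := ne_endpoints.mono fun β h ↦ hasDerivAt_becFixedDelayExponent h.1 h.2
  have deriv_ne_zero : ∀ᶠ β : ℝ in 𝓝 (1 / 2), -1 / (β * (1 - β)) ≠ 0 :=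
    ne_endpoints.mono fun β h ↦ div_ne_zero (by norm_num) (mul_ne_zero h.1 (sub_ne_zero.2 h.2.symm))
  have hEsp_tendsto : Tendsto becSpherePackingExponent (𝓝 (1 / 2)) (𝓝 0) := by
    simpa only [becSpherePackingExponent_one_half] using hEsp.self_of_nhds.continuousAt.tendsto
  have hEa_tendsto : Tendsto becFixedDelayExponent (𝓝 (1 / 2)) (𝓝 0) := by
    simpa only [becFixedDelayExponent_one_half] using hEa.self_of_nhds.continuousAt.tendsto
  have deriv_ratio : ∀ᶠ β : ℝ in 𝓝 (1 / 2),
      (1 - 2 * β) / 2 = -(1 - 2 * β) / (2 * β * (1 - β)) / (-1 / (β * (1 - β))) := by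
    filter_upwards [ne_endpoints] with β ⟨h0, h1⟩
    have h1' : 1 - β ≠ 0 := sub_ne_zero.2 h1.symm
    field_simp
  have deriv_ratio_tendsto : Tendsto (fun β : ℝ ↦ (1 - 2 * β) / 2) (𝓝 (1 / 2)) (𝓝 0) :=
    Continuous.tendsto' (by fun_prop) _ _ (by norm_num)
  exact HasDerivAt.lhopital_zero_nhds hEsp hEa deriv_ne_zero hEsp_tendsto hEa_tendsto
    (deriv_ratio_tendsto.congr' deriv_ratio)

end Exponents

/-- **The feedback gain at rate 1/2 over the BEC is unbounded as `β → 1/2⁻`.**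
For `β ∈ (0,1/2)`, the fixed-delay exponent achieved with noiseless feedback at rate
`1/2` over `BEC(β)` is `E_a = ln(1-β) - ln β` and the sphere-packing exponent is
`E_sp = -ln(4β(1-β))/2`; both are strictly positive on `(0,1/2)`, and their ratio
`E_a/E_sp` tends to `+∞` as `β → (1/2)⁻`. -/
theorem bec_feedback_gain_unbounded :
    (∀ β : ℝ, 0 < β → β < 1 / 2 →
      0 < Real.log (1 - β) - Real.log β ∧ 0 < -Real.log (4 * β * (1 - β)) / 2) ∧
    Tendsto
      (fun β : ℝ => (Real.log (1 - β) - Real.log β) / (-Real.log (4 * β * (1 - β)) / 2))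
      (nhdsWithin (1 / 2 : ℝ) (Set.Iio (1 / 2))) atTop := by
  refine ⟨fun β h0 h1 ↦ ⟨becFixedDelayExponent_pos h0 h1,
    becSpherePackingExponent_pos h0 (by linarith) h1.ne⟩, ?_⟩
  have ratio_pos : ∀ᶠ β : ℝ in 𝓝[<] (1 / 2),
      0 < becSpherePackingExponent β / becFixedDelayExponent β := by
    filter_upwards [Ioo_mem_nhdsLT (show (0 : ℝ) < 1 / 2 by norm_num)] with β ⟨h0, h1⟩
    exact div_pos (becSpherePackingExponent_pos h0 (by linarith) h1.ne)
      (becFixedDelayExponent_pos h0 h1)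
  have ratio_tendsto : Tendsto (fun β ↦ becSpherePackingExponent β / becFixedDelayExponent β)
      (𝓝[<] (1 / 2)) (𝓝[>] 0) :=
    tendsto_nhdsWithin_iff.2 ⟨tendsto_becSpherePackingExponent_div_becFixedDelayExponent.mono_left
      (nhdsLT_le_nhdsNE _), ratio_pos⟩
  exact ratio_tendsto.inv_tendsto_nhdsGT_zero.congr fun β ↦ inv_div _ _

end
end
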